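/- Let c ∈ [nπ/2, (n+1)π/2), let I ⊂ ℝ be an open interval and D ⊂ ℝⁿ a bounded domain. If v, w ∈ ℱ_c(I × D), then (v + w)/2 ∈ ℱ_c(I × D). -/

import Mathlib

open Real Filter Matrix

noncomputable section

/-- The Hessian matrix of a function `v : ℝ^m → ℝ` at `x`. -/
def hessianMatrix {m : ℕ} (v : (Fin m → ℝ) → ℝ) (x : Fin m → ℝ) :
    Matrix (Fin m) (Fin m) ℝ :=
  Matrix.of fun i j => iteratedFDeriv ℝ 2 v x ![Pi.single i 1, Pi.single j 1]

/-- The lifted Lagrangian angle θ̃(A) = ∑ arctan λ_j(A) of a real symmetric matrix. -/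
def liftedAngle {m : ℕ} (A : Matrix (Fin m) (Fin m) ℝ) : ℝ :=
  if h : A.IsHermitian then ∑ j, Real.arctan (h.eigenvalues j) else 0

/-- The Harvey–Lawson branches `F_c` of the special Lagrangian subequation. -/
def Fc (m : ℕ) (c : ℝ) : Set (Matrix (Fin m) (Fin m) ℝ) :=
  {A | A.IsSymm ∧ c ≤ liftedAngle A}

/-- `I_n = diag(0,1,…,1)` as a complex `(n+1)×(n+1)` matrix. -/
def Inmat (n : ℕ) : Matrix (Fin (n+1)) (Fin (n+1)) ℂ :=
  Matrix.diagonal fun i => if i = 0 then 0 else 1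

/-- The complex matrix `I_n + i A`. -/
def cmat {n : ℕ} (A : Matrix (Fin (n+1)) (Fin (n+1)) ℝ) :
    Matrix (Fin (n+1)) (Fin (n+1)) ℂ :=
  Inmat n + Complex.I • A.map (fun a => (a : ℂ))

open Classical in
/-- The lifted space-time Lagrangian angle Θ̃, summing `Complex.arg` (with values in
`(-π, π]`) over the roots (with multiplicity) of the characteristic polynomial of
`I_n + i A`, shifted by `π/2` over the singular set `S = {det (I_n + iA) = 0}` where only
the nonzero roots are counted. -/
def spaceTimeAngle {n : ℕ} (A : Matrix (Fin (n+1)) (Fin (n+1)) ℝ) : ℝ :=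
  if (cmat A).det = 0 then
    π / 2 + ((((cmat A).charpoly.roots).filter (fun z => z ≠ 0)).map Complex.arg).sum
  else (((cmat A).charpoly.roots).map Complex.arg).sum

/-- The degenerate special Lagrangian subequation `ℱ_c ⊂ Sym(ℝ^{n+1})`. -/
def calF (n : ℕ) (c : ℝ) : Set (Matrix (Fin (n+1)) (Fin (n+1)) ℝ) :=
  {A | A.IsSymm ∧ c ≤ spaceTimeAngle A}

/-- Interior of a set of symmetric matrices, relative to the symmetric matrices. -/
def symInterior {m : ℕ} (F : Set (Matrix (Fin m) (Fin m) ℝ)) :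
    Set (Matrix (Fin m) (Fin m) ℝ) :=
  {A | A.IsSymm ∧ ∀ᶠ B in nhds A, B.IsSymm → B ∈ F}

/-- The dual subequation `F̃ = (−Int F)ᶜ` (within the symmetric matrices). -/
def dualSub {m : ℕ} (F : Set (Matrix (Fin m) (Fin m) ℝ)) :
    Set (Matrix (Fin m) (Fin m) ℝ) :=
  {A | A.IsSymm ∧ -A ∉ symInterior F}

/-- An `EReal`-valued (i.e. `[−∞,∞)`-valued) function is subaffine on `U` if, for every
affine function `a` and compact `K ⊆ U`, `u ≤ a` on `∂K` implies `u ≤ a` on `K`. -/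
def IsSubaffine {m : ℕ} (U : Set (Fin m → ℝ)) (u : (Fin m → ℝ) → EReal) : Prop :=
  ∀ (a : (Fin m → ℝ) →ᵃ[ℝ] ℝ) (K : Set (Fin m → ℝ)), IsCompact K → K ⊆ U →
    (∀ x ∈ frontier K, u x ≤ (a x : EReal)) → ∀ x ∈ K, u x ≤ (a x : EReal)

/-- `u` is of type `F` on `U` (i.e. `u ∈ F(U)`): `u` is `[−∞,∞)`-valued, upper
semicontinuous on `U`, and `u + v` is subaffine on `U` for every `C²` function `v`
whose Hessian lies in the dual subequation `F̃` at every point of `U`. -/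
def IsTypeF {m : ℕ} (F : Set (Matrix (Fin m) (Fin m) ℝ)) (U : Set (Fin m → ℝ))
    (u : (Fin m → ℝ) → EReal) : Prop :=
  (∀ x ∈ U, u x ≠ ⊤) ∧ UpperSemicontinuousOn u U ∧
    ∀ v : (Fin m → ℝ) → ℝ, ContDiffOn ℝ 2 v U →
      (∀ x ∈ U, hessianMatrix v x ∈ dualSub F) →
      IsSubaffine U (fun x => u x + ((v x : ℝ) : EReal))

/-- The lower-right `n×n` block `A⁺` of an `(n+1)×(n+1)` matrix. -/
def Aplus {n : ℕ} (A : Matrix (Fin (n+1)) (Fin (n+1)) ℝ) : Matrix (Fin n) (Fin n) ℝ :=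
  Matrix.of fun i j => A i.succ j.succ

end

/-! For `c ≥ nπ/2` every matrix in the interior of `ℱ_c` is positive definite. On positive
semidefinite matrices with `A₀₀ ≠ 0` the angle `Θ̃(A)` is the limit, as `r → ∞`, of the Lagrangian
angles of `rA` relative to the inner products `1 + r I_n`. Each of these is a trace of `arctan`,
which is concave and increasing on `[0, ∞)`, hence concave and monotone on positive semidefinite
matrices by Peierls' inequality. Therefore `Int ℱ_c` is convex and upward closed.

Half sums preserve type `F` whenever `Int F` is convex and upward closed. Suppose `v + w` is touched
strictly from above at `z` by a `C²` function `ψ` with `½ D²ψ(z) ∉ Int F` (up to a small quadratic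
perturbation). Separate `½ D²ψ(z)` from `Int F` by a linear functional `l`, with `l = b` at
`½ D²ψ(z)` and `l > b` on `Int F`; it is necessarily monotone. On a small ball around `z` the
functions `v` and `w` lie below polynomial solutions `P` and `Q` of `l(D²P) = l(D²Q) = b` whose
boundary values are slightly larger, and the linear maximum principle applied to `P + Q - ψ`
excludes the contact at `z`.
-/

section

open scoped MatrixOrder

section Hessian

variable {m : ℕ} {f g : (Fin m → ℝ) → ℝ} {x : Fin m → ℝ}

lemma hessianMatrix_apply (f : (Fin m → ℝ) → ℝ) (x : Fin m → ℝ) (i j : Fin m) :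
    hessianMatrix f x i j = fderiv ℝ (fderiv ℝ f) x (Pi.single i 1) (Pi.single j 1) := by
  simp [hessianMatrix, iteratedFDeriv_two_apply]

lemma hessianMatrix_add (hf : ContDiffAt ℝ 2 f x) (hg : ContDiffAt ℝ 2 g x) :
    hessianMatrix (fun y => f y + g y) x = hessianMatrix f x + hessianMatrix g x := by
  ext i j
  exact congrArg (· ![Pi.single i 1, Pi.single j 1]) (iteratedFDeriv_add_apply hf hg)

lemma hessianMatrix_neg (f : (Fin m → ℝ) → ℝ) (x : Fin m → ℝ) :
    hessianMatrix (fun y => -f y) x = -hessianMatrix f x := by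
  ext i j
  exact congrArg (· ![Pi.single i 1, Pi.single j 1])
    (iteratedFDeriv_neg_apply (𝕜 := ℝ) (f := f))

lemma hessianMatrix_sub (hf : ContDiffAt ℝ 2 f x) (hg : ContDiffAt ℝ 2 g x) :
    hessianMatrix (fun y => f y - g y) x = hessianMatrix f x - hessianMatrix g x := by
  simp only [sub_eq_add_neg, hessianMatrix_add hf hg.neg, hessianMatrix_neg]

lemma hessianMatrix_const_mul (a : ℝ) (hf : ContDiffAt ℝ 2 f x) :
    hessianMatrix (fun y => a * f y) x = a • hessianMatrix f x := by
  ext i j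
  exact congrArg (· ![Pi.single i 1, Pi.single j 1])
    (iteratedFDeriv_const_smul_apply (𝕜 := ℝ) (a := a) hf)

lemma contDiff_affineMap (a : (Fin m → ℝ) →ᵃ[ℝ] ℝ) : ContDiff ℝ 2 a :=
  (⟨a, a.continuous_of_finiteDimensional⟩ : (Fin m → ℝ) →ᴬ[ℝ] ℝ).contDiff

lemma hessianMatrix_affineMap (a : (Fin m → ℝ) →ᵃ[ℝ] ℝ) (x : Fin m → ℝ) :
    hessianMatrix a x = 0 := by
  let a' : (Fin m → ℝ) →ᴬ[ℝ] ℝ := ⟨a, a.continuous_of_finiteDimensional⟩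
  have hderiv : fderiv ℝ a = fun _ => a'.contLinear := by
    funext y
    exact a'.fderiv
  ext i j
  simp [hessianMatrix_apply, hderiv]

lemma isSymm_hessianMatrix (hf : ContDiffAt ℝ 2 f x) : (hessianMatrix f x).IsSymm := by
  ext i j
  simpa only [Matrix.transpose_apply, hessianMatrix_apply]
    using hf.isSymmSndFDerivAt (by simp) (Pi.single j 1) (Pi.single i 1)

lemma continuousAt_hessianMatrix (hf : ContDiffAt ℝ 2 f x) :
    ContinuousAt (hessianMatrix f) x := by
  have hf' : ContDiffAt ℝ 1 (fderiv ℝ f) x := hf.fderiv_right (by norm_num)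
  have hf'' : ContinuousAt (fderiv ℝ (fderiv ℝ f)) x :=
    (hf'.fderiv_right (m := 0) (by norm_num)).continuousAt
  refine continuousAt_pi.2 fun i => continuousAt_pi.2 fun j => ?_
  simp only [hessianMatrix_apply]
  fun_prop

lemma dotProduct_hessianMatrix_mulVec (f : (Fin m → ℝ) → ℝ) (x e : Fin m → ℝ) :
    e ⬝ᵥ (hessianMatrix f x *ᵥ e) = fderiv ℝ (fderiv ℝ f) x e e := by
  have he : e = ∑ i, e i • (Pi.single i (1 : ℝ) : Fin m → ℝ) := by
    ext j; simp [Finset.sum_apply, Pi.single_apply]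
  conv_rhs => rw [he]
  simp only [map_sum, map_smul, _root_.sum_apply, _root_.smul_apply,
    smul_eq_mul, dotProduct, Matrix.mulVec, hessianMatrix_apply, Finset.mul_sum]
  rw [Finset.sum_comm]
  exact Finset.sum_congr rfl fun i _ => Finset.sum_congr rfl fun j _ => by ring

lemma deriv_deriv_comp_add_smul (hf : ContDiffAt ℝ 2 f x) (e : Fin m → ℝ) :
    deriv (deriv fun t : ℝ => f (x + t • e)) 0 = fderiv ℝ (fderiv ℝ f) x e e := by
  have hline (t : ℝ) : HasDerivAt (fun t : ℝ => x + t • e) e t := by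
    simpa using ((hasDerivAt_id t).smul_const e).const_add x
  have htendsto : Tendsto (fun t : ℝ => x + t • e) (nhds 0) (nhds x) := by
    simpa using (hline 0).continuousAt.tendsto
  have hdiff : ∀ᶠ y in nhds x, DifferentiableAt ℝ f y :=
    (hf.eventually (by simp)).mono fun y hy => hy.differentiableAt (by simp)
  have hderiv : deriv (fun t : ℝ => f (x + t • e)) =ᶠ[nhds 0]
      fun t => fderiv ℝ f (x + t • e) e := by
    filter_upwards [htendsto.eventually hdiff] with t ht
    exact (ht.hasFDerivAt.comp_hasDerivAt t (hline t)).deriv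
  have hf' : HasFDerivAt (fderiv ℝ f) (fderiv ℝ (fderiv ℝ f) x) (x + (0 : ℝ) • e) := by
    rw [zero_smul, add_zero]
    exact ((hf.fderiv_right (m := 1) (by norm_num)).differentiableAt (by simp)).hasFDerivAt
  have hcomp : HasDerivAt (fun t : ℝ => fderiv ℝ f (x + t • e)) (fderiv ℝ (fderiv ℝ f) x e) 0 :=
    hf'.comp_hasDerivAt 0 (hline 0)
  rw [hderiv.deriv_eq]
  simpa using (hcomp.clm_apply (hasDerivAt_const 0 e)).deriv

lemma deriv_deriv_nonpos_of_isLocalMax {g : ℝ → ℝ} {t : ℝ} (hmax : IsLocalMax g t)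
    (hg : ContinuousAt g t) : deriv (deriv g) t ≤ 0 := by
  by_contra! hpos
  have hmin : IsLocalMin g t := isLocalMin_of_deriv_deriv_pos hpos hmax.deriv_eq_zero hg
  have hconst : g =ᶠ[nhds t] fun _ => g t := by
    filter_upwards [hmax, hmin] with s h₁ h₂ using le_antisymm h₁ h₂
  have hzero : deriv (deriv g) t = 0 := by simp [hconst.deriv.deriv_eq]
  exact hpos.ne' hzero

lemma hessianMatrix_nonpos_of_isLocalMax (hf : ContDiffAt ℝ 2 f x) (hmax : IsLocalMax f x) :
    hessianMatrix f x ≤ 0 := by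
  rw [Matrix.le_iff, zero_sub]
  refine .of_dotProduct_mulVec_nonneg ?_ fun e => ?_
  · exact (conjTranspose_eq_transpose_of_trivial _).trans (isSymm_hessianMatrix hf).neg
  have hline : ContinuousAt (fun t : ℝ => x + t • e) 0 := by fun_prop
  have hmax' : IsLocalMax (fun t : ℝ => f (x + t • e)) 0 := by
    have htendsto : Tendsto (fun t : ℝ => x + t • e) (nhds 0) (nhds x) := by
      simpa using hline.tendsto
    simpa [IsLocalMax, IsMaxFilter] using htendsto.eventually hmax
  have hcont : ContinuousAt (fun t : ℝ => f (x + t • e)) 0 :=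
    ContinuousAt.comp (by simpa using hf.continuousAt) hline
  have hle := deriv_deriv_nonpos_of_isLocalMax hmax' hcont
  rw [deriv_deriv_comp_add_smul hf, ← dotProduct_hessianMatrix_mulVec] at hle
  simpa [Matrix.neg_mulVec] using hle

end Hessian

section ConstantCoefficient

open MvPolynomial

lemma totalDegree_pderiv_le {σ R : Type*} [CommSemiring R] (i : σ) (p : MvPolynomial σ R) :
    (pderiv i p).totalDegree ≤ p.totalDegree - 1 := by
  conv_lhs => rw [p.as_sum, map_sum]
  refine totalDegree_finsetSum_le fun s hs => ?_
  rw [pderiv_monomial]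
  rcases eq_or_ne (s i) 0 with hsi | hsi
  · simp [hsi]
  have hle : Finsupp.single i 1 ≤ s := by simpa [Nat.one_le_iff_ne_zero] using hsi
  have hdeg : (s - Finsupp.single i 1).degree + 1 = s.degree := by
    simpa using congrArg Finsupp.degree (tsub_add_cancel_of_le hle)
  have hs' : s.degree ≤ p.totalDegree := le_totalDegree hs
  calc _ ≤ (s - Finsupp.single i 1).degree := totalDegree_monomial_le _ _
    _ ≤ p.totalDegree - 1 := by omega

variable {m : ℕ}

lemma hasFDerivAt_eval (p : MvPolynomial (Fin m) ℝ) (x : Fin m → ℝ) :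
    HasFDerivAt (fun y => eval y p)
      (∑ i, eval x (pderiv i p) • (ContinuousLinearMap.proj i : (Fin m → ℝ) →L[ℝ] ℝ)) x := by
  induction p using MvPolynomial.induction_on with
  | C a => simpa using hasFDerivAt_const a x
  | add p q hp hq =>
    simp only [map_add, add_smul, Finset.sum_add_distrib]
    exact hp.add hq
  | mul_X p j hp =>
    have hX : HasFDerivAt (fun y : Fin m → ℝ => y j)
      (ContinuousLinearMap.proj j : (Fin m → ℝ) →L[ℝ] ℝ) x :=
      (ContinuousLinearMap.proj j : (Fin m → ℝ) →L[ℝ] ℝ).hasFDerivAt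
    simp only [map_mul, eval_X]
    refine (hp.mul hX).congr_fderiv ?_
    ext e
    simp only [Derivation.leibniz, pderiv_X, smul_eq_mul, map_add, map_mul,
      eval_X, add_smul, Finset.sum_add_distrib, Pi.single_apply]
    simp [Finset.mul_sum, mul_assoc, apply_ite]

lemma hessianMatrix_eval (p : MvPolynomial (Fin m) ℝ) (x : Fin m → ℝ) :
    hessianMatrix (fun y => eval y p) x =
      Matrix.of fun i j => eval x (pderiv i (pderiv j p)) := by
  ext i j
  have hderiv : fderiv ℝ (fun y => eval y p) = fun x =>
      ∑ k, eval x (pderiv k p) • (ContinuousLinearMap.proj k : (Fin m → ℝ) →L[ℝ] ℝ) :=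
    funext fun x => (hasFDerivAt_eval p x).fderiv
  have hderiv' := HasFDerivAt.fun_sum (u := Finset.univ) fun k _ =>
    (hasFDerivAt_eval (pderiv k p) x).smul_const
      (ContinuousLinearMap.proj k : (Fin m → ℝ) →L[ℝ] ℝ)
  rw [hessianMatrix_apply, hderiv, hderiv'.fderiv]
  simp [Pi.single_apply]

lemma contDiff_eval (p : MvPolynomial (Fin m) ℝ) {k : WithTop ℕ∞} :
    ContDiff ℝ k fun y => eval y p :=
  (AnalyticOnNhd.eval_mvPolynomial p).contDiff

/-- The constant-coefficient operator `p ↦ l (D²p)` on polynomials attached to a linear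
functional `l` on matrices. -/
noncomputable def hessianOperator (l : Matrix (Fin m) (Fin m) ℝ →ₗ[ℝ] ℝ) :
    MvPolynomial (Fin m) ℝ →ₗ[ℝ] MvPolynomial (Fin m) ℝ :=
  ∑ i, ∑ j, l (Matrix.single i j 1) • ((pderiv i).toLinearMap ∘ₗ (pderiv j).toLinearMap)

lemma eval_hessianOperator (l : Matrix (Fin m) (Fin m) ℝ →ₗ[ℝ] ℝ)
    (p : MvPolynomial (Fin m) ℝ) (x : Fin m → ℝ) :
    eval x (hessianOperator l p) = l (hessianMatrix (fun y => eval y p) x) := by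
  have hsingle (i j : Fin m) (a : ℝ) : l (Matrix.single i j a) = l (Matrix.single i j 1) * a := by
    rw [mul_comm, ← smul_eq_mul, ← map_smul, Matrix.smul_single, smul_eq_mul, mul_one]
  rw [hessianMatrix_eval, Matrix.matrix_eq_sum_single (Matrix.of _)]
  simp only [map_sum, Matrix.of_apply, hsingle _ _ (eval x _), hessianOperator,
    LinearMap.sum_apply, LinearMap.smul_apply, smul_eval]
  rfl

lemma totalDegree_hessianOperator_le (l : Matrix (Fin m) (Fin m) ℝ →ₗ[ℝ] ℝ)
    (p : MvPolynomial (Fin m) ℝ) : (hessianOperator l p).totalDegree ≤ p.totalDegree - 2 := by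
  simp only [hessianOperator, LinearMap.sum_apply]
  refine totalDegree_finsetSum_le fun i _ => totalDegree_finsetSum_le fun j _ => ?_
  calc (l (Matrix.single i j 1) • pderiv i (pderiv j p)).totalDegree
      ≤ (pderiv i (pderiv j p)).totalDegree := totalDegree_smul_le _ _
    _ ≤ (pderiv j p).totalDegree - 1 := totalDegree_pderiv_le _ _
    _ ≤ p.totalDegree - 1 - 1 := Nat.sub_le_sub_right (totalDegree_pderiv_le j p) 1

/-- The squared Euclidean distance; it is written out in coordinates because `Fin m → ℝ`
carries the sup norm. -/
def sqDist (z x : Fin m → ℝ) : ℝ := ∑ i, (x i - z i) ^ 2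

/-- `sqDist z` as a polynomial. -/
noncomputable def sqDistPoly (z : Fin m → ℝ) : MvPolynomial (Fin m) ℝ := ∑ i, (X i - C (z i)) ^ 2

lemma eval_sqDistPoly (z x : Fin m → ℝ) : eval x (sqDistPoly z) = sqDist z x := by
  simp [sqDistPoly, sqDist]

lemma totalDegree_sqDistPoly_le (z : Fin m → ℝ) : (sqDistPoly z).totalDegree ≤ 2 := by
  refine totalDegree_finsetSum_le fun i _ => ?_
  calc ((X i - C (z i)) ^ 2 : MvPolynomial (Fin m) ℝ).totalDegree
      ≤ 2 * (X i - C (z i) : MvPolynomial (Fin m) ℝ).totalDegree := totalDegree_pow _ _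
    _ ≤ 2 * 1 := Nat.mul_le_mul_left 2 ((totalDegree_sub_C_le _ _).trans (totalDegree_X i).le)

lemma sqDist_nonneg (z x : Fin m → ℝ) : 0 ≤ sqDist z x :=
  Finset.sum_nonneg fun _ _ => sq_nonneg _

@[simp] lemma sqDist_self (z : Fin m → ℝ) : sqDist z z = 0 := by simp [sqDist]

lemma contDiff_sqDist (z : Fin m → ℝ) {k : WithTop ℕ∞} : ContDiff ℝ k (sqDist z) := by
  simpa only [eval_sqDistPoly] using contDiff_eval (sqDistPoly z)

lemma hessianMatrix_sqDist (z x : Fin m → ℝ) : hessianMatrix (sqDist z) x = (2 : ℝ) • 1 := by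
  have hpderiv (j : Fin m) : pderiv j (sqDistPoly z) = C 2 * (X j - C (z j)) := by
    rw [sqDistPoly, map_sum, Finset.sum_eq_single j]
    · simp [Derivation.leibniz_pow, map_ofNat]
    · intro k _ hk; simp [Derivation.leibniz_pow, hk]
    · simp
  have hpoly : sqDist z = fun y => eval y (sqDistPoly z) :=
    funext fun y => (eval_sqDistPoly z y).symm
  rw [hpoly, hessianMatrix_eval]
  ext i j
  rw [Matrix.of_apply, hpderiv, pderiv_C_mul]
  simp [pderiv_X, Matrix.one_apply, Pi.single_apply, eq_comm, apply_ite]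

lemma isCompact_setOf_sqDist_le (z : Fin m → ℝ) (r : ℝ) : IsCompact {x | sqDist z x ≤ r} := by
  refine Metric.isCompact_of_isClosed_isBounded
    (isClosed_le (contDiff_sqDist z (k := 0)).continuous continuous_const) ?_
  refine (Metric.isBounded_closedBall (x := z) (r := √r)).subset fun x hx => ?_
  refine (dist_pi_le_iff (Real.sqrt_nonneg r)).2 fun i => Real.abs_le_sqrt ?_
  exact (Finset.single_le_sum (f := fun i => (x i - z i) ^ 2) (fun i _ => sq_nonneg _)
    (Finset.mem_univ i)).trans hx

lemma exists_setOf_sqDist_le_subset {z : Fin m → ℝ} {N : Set (Fin m → ℝ)} (hN : N ∈ nhds z) :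
    ∃ r : ℝ, 0 < r ∧ {x | sqDist z x ≤ r} ⊆ N := by
  obtain ⟨ε, hε, hball⟩ := Metric.mem_nhds_iff.1 hN
  refine ⟨(ε / 2) ^ 2, by positivity, fun x hx => hball ((dist_pi_lt_iff hε).2 fun i => ?_)⟩
  have hle : (x i - z i) ^ 2 ≤ (ε / 2) ^ 2 :=
    (Finset.single_le_sum (f := fun i => (x i - z i) ^ 2) (fun i _ => sq_nonneg _)
      (Finset.mem_univ i)).trans hx
  exact (abs_le_of_sq_le_sq hle (by positivity)).trans_lt (half_lt_self hε)

lemma isOpen_setOf_sqDist_lt (z : Fin m → ℝ) (r : ℝ) : IsOpen {x | sqDist z x < r} :=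
  isOpen_lt (contDiff_sqDist z (k := 0)).continuous continuous_const

end ConstantCoefficient

section MaximumPrinciple

open MvPolynomial

variable {m : ℕ} {l : Matrix (Fin m) (Fin m) ℝ →ₗ[ℝ] ℝ} {K : Set (Fin m → ℝ)}
  {f : (Fin m → ℝ) → ℝ} {z x : Fin m → ℝ} {M R : ℝ}

lemma le_of_frontier_le_of_hessianMatrix_pos (hl : Monotone l) (hK : IsCompact K)
    (hf : ∀ y ∈ K, ContDiffAt ℝ 2 f y) (hpos : ∀ y ∈ K, 0 < l (hessianMatrix f y))
    (hM : ∀ y ∈ frontier K, f y ≤ M) (hx : x ∈ K) : f x ≤ M := by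
  obtain ⟨y, hyK, hmax⟩ := hK.exists_isMaxOn ⟨x, hx⟩
    fun y hy => (hf y hy).continuousAt.continuousWithinAt
  refine (hmax hx).trans (hM y ⟨subset_closure hyK, fun hint => ?_⟩)
  have hlocal : IsLocalMax f y := hmax.isLocalMax (mem_interior_iff_mem_nhds.1 hint)
  have hnonpos := hl (hessianMatrix_nonpos_of_isLocalMax (hf y hyK) hlocal)
  exact (hpos y hyK).not_ge (hnonpos.trans_eq (map_zero l))

lemma le_of_frontier_le_of_hessianMatrix_nonneg (hl : Monotone l) (hl1 : 0 < l 1)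
    (hK : IsCompact K) (hf : ∀ y ∈ K, ContDiffAt ℝ 2 f y)
    (hnonneg : ∀ y ∈ K, 0 ≤ l (hessianMatrix f y)) (hM : ∀ y ∈ frontier K, f y ≤ M)
    (hx : x ∈ K) : f x ≤ M := by
  obtain ⟨B, hB⟩ := hK.bddAbove_image (contDiff_sqDist 0 (k := 0)).continuous.continuousOn
  have hperturb (δ : ℝ) (hδ : 0 < δ) : f x ≤ M + δ * B := by
    have hsq (y : Fin m → ℝ) : ContDiffAt ℝ 2 (fun y => δ * sqDist 0 y) y :=
      contDiffAt_const.mul (contDiff_sqDist 0).contDiffAt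
    have hle := le_of_frontier_le_of_hessianMatrix_pos (f := fun y => f y + δ * sqDist 0 y)
      (M := M + δ * B) hl hK (fun y hy => (hf y hy).add (hsq y)) (fun y hy => ?_)
      (fun y hy => ?_) hx
    · exact (le_add_of_nonneg_right (mul_nonneg hδ.le (sqDist_nonneg 0 x))).trans hle
    · rw [hessianMatrix_add (hf y hy) (hsq y), hessianMatrix_const_mul _
        (contDiff_sqDist 0).contDiffAt, hessianMatrix_sqDist]
      simp only [map_add, map_smul, smul_eq_mul]
      have hy0 := hnonneg y hy
      positivity
    · exact add_le_add (hM y hy) (mul_le_mul_of_nonneg_left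
        (hB (Set.mem_image_of_mem _ (hK.isClosed.frontier_subset hy))) hδ.le)
  have htendsto : Tendsto (fun δ : ℝ => M + δ * B) (nhdsWithin 0 (Set.Ioi 0)) (nhds M) := by
    have hcont : Continuous fun δ : ℝ => M + δ * B := by fun_prop
    simpa using (hcont.tendsto 0).mono_left nhdsWithin_le_nhds
  exact ge_of_tendsto htendsto (eventually_mem_nhdsWithin.mono hperturb)

lemma eq_zero_of_frontier_eq_zero (hl : Monotone l) (hl1 : 0 < l 1)
    (hK : IsCompact K) (hf : ∀ y ∈ K, ContDiffAt ℝ 2 f y)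
    (hzero : ∀ y ∈ K, l (hessianMatrix f y) = 0) (hfr : ∀ y ∈ frontier K, f y = 0)
    (hx : x ∈ K) : f x = 0 := by
  have hle := le_of_frontier_le_of_hessianMatrix_nonneg hl hl1 hK hf
    (fun y hy => (hzero y hy).ge) (fun y hy => (hfr y hy).le) hx
  have hneg := le_of_frontier_le_of_hessianMatrix_nonneg (f := fun y => -f y) (M := 0) hl hl1 hK
    (fun y hy => (hf y hy).neg) (fun y hy => by simp [hessianMatrix_neg, hzero y hy])
    (fun y hy => by simp [hfr y hy]) hx
  linarith

lemma sqDist_eq_of_mem_frontier (hx : x ∈ frontier {y | sqDist z y ≤ R}) : sqDist z x = R :=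
  frontier_le_subset_eq (contDiff_sqDist z (k := 0)).continuous continuous_const hx

lemma eq_zero_of_eval_eq_zero_of_mem_nhds {q : MvPolynomial (Fin m) ℝ} {N : Set (Fin m → ℝ)}
    (hN : N ∈ nhds z) (hq : ∀ x ∈ N, eval x q = 0) : q = 0 := by
  obtain ⟨ε, hε, hball⟩ := Metric.mem_nhds_iff.1 hN
  refine funext_set (fun i => Metric.ball (z i) ε) (fun i => ?_) fun x hx => ?_
  · rw [Real.ball_eq_Ioo]; exact Set.Ioo_infinite (by linarith)
  · rw [map_zero]
    exact hq x (hball ((ball_pi z hε).symm ▸ hx))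

lemma eq_zero_of_hessianOperator_mul_eq_zero (hl : Monotone l) (hl1 : 0 < l 1) (hR : 0 < R)
    {q : MvPolynomial (Fin m) ℝ} (hq : hessianOperator l ((C R - sqDistPoly z) * q) = 0) :
    q = 0 := by
  have hzero : ∀ x ∈ {x | sqDist z x ≤ R}, eval x ((C R - sqDistPoly z) * q) = 0 := fun x hx =>
    eq_zero_of_frontier_eq_zero hl hl1 (isCompact_setOf_sqDist_le z R)
      (fun y _ => (contDiff_eval _).contDiffAt)
      (fun y _ => by rw [← eval_hessianOperator, hq, map_zero])
      (fun y hy => by simp [eval_sqDistPoly, sqDist_eq_of_mem_frontier hy]) hx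
  have hnhds : {x | sqDist z x < R} ∈ nhds z :=
    (isOpen_setOf_sqDist_lt z R).mem_nhds (by simpa using hR)
  refine eq_zero_of_eval_eq_zero_of_mem_nhds hnhds fun x (hx : sqDist z x < R) => ?_
  have hmul : (R - sqDist z x) * eval x q = 0 := by
    simpa [eval_sqDistPoly] using hzero x hx.le
  exact (mul_eq_zero.1 hmul).resolve_left (sub_pos.2 hx).ne'

/-- Fischer's argument: `q ↦ l (D² ((R - |x - z|²) q))` preserves the finite-dimensional space of
polynomials of degree at most `d`, so that injectivity forces surjectivity. -/
lemma exists_hessianOperator_mul_eq (hl : Monotone l) (hl1 : 0 < l 1) (hR : 0 < R)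
    (z : Fin m → ℝ) (p : MvPolynomial (Fin m) ℝ) :
    ∃ q, hessianOperator l ((C R - sqDistPoly z) * q) = p := by
  let V := restrictTotalDegree (Fin m) ℝ p.totalDegree
  let T := hessianOperator l ∘ₗ LinearMap.mulLeft ℝ (C R - sqDistPoly z)
  have hdeg : (C R - sqDistPoly z).totalDegree ≤ 2 :=
    (totalDegree_sub _ _).trans (by simpa using totalDegree_sqDistPoly_le z)
  have hmem : ∀ q ∈ V, T q ∈ V := fun q hq => by
    rw [mem_restrictTotalDegree] at hq ⊢
    have h₁ := totalDegree_hessianOperator_le l ((C R - sqDistPoly z) * q)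
    have h₂ := totalDegree_mul (C R - sqDistPoly z) q
    exact h₁.trans (by omega)
  have hinj : Function.Injective (T.restrict hmem) := by
    refine (injective_iff_map_eq_zero _).2 fun q hq => Subtype.ext ?_
    exact eq_zero_of_hessianOperator_mul_eq_zero hl hl1 hR (congrArg Subtype.val hq)
  obtain ⟨q, hq⟩ := LinearMap.injective_iff_surjective.1 hinj
    ⟨p, (mem_restrictTotalDegree _ _ _).2 le_rfl⟩
  exact ⟨q, congrArg Subtype.val hq⟩

lemma exists_eval_eq_on_sphere_and_hessianOperator_eq (hl : Monotone l) (hl1 : 0 < l 1)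
    (hR : 0 < R) (z : Fin m → ℝ) (f p : MvPolynomial (Fin m) ℝ) :
    ∃ h, (∀ x, sqDist z x = R → eval x h = eval x f) ∧ hessianOperator l h = p := by
  obtain ⟨q, hq⟩ := exists_hessianOperator_mul_eq hl hl1 hR z (p - hessianOperator l f)
  exact ⟨f + (C R - sqDistPoly z) * q, fun x hx => by simp [eval_sqDistPoly, hx], by simp [hq]⟩

end MaximumPrinciple

section Approximation

open MvPolynomial

lemma exists_coe_lt_and_lt_coe_sub {a b : EReal} {s : ℝ} (ha : a ≠ ⊤) (hb : b ≠ ⊤)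
    (h : a + b < s) : ∃ t : ℝ, a < t ∧ b < ((s - t : ℝ) : EReal) := by
  have hab : a < s - b := (EReal.lt_sub_iff_add_lt (.inr ha) (.inl hb)).2 h
  obtain ⟨t, hat, htb⟩ := EReal.lt_iff_exists_real_btwn.1 hab
  refine ⟨t, hat, ?_⟩
  have htb' : b + t < s := add_comm b t ▸ EReal.add_lt_of_lt_sub htb
  rw [EReal.coe_sub]
  exact (EReal.lt_sub_iff_add_lt (.inl (EReal.coe_ne_bot t)) (.inl (EReal.coe_ne_top t))).2 htb'

lemma exists_continuousMap_lt_and_lt_sub {X : Type*} [TopologicalSpace X] [NormalSpace X]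
    [ParacompactSpace X] {v w : X → EReal} (hvtop : ∀ x, v x ≠ ⊤) (hwtop : ∀ x, w x ≠ ⊤)
    (hv : UpperSemicontinuous v) (hw : UpperSemicontinuous w) (g : C(X, ℝ))
    (h : ∀ x, v x + w x < g x) :
    ∃ f : C(X, ℝ), ∀ x, v x < f x ∧ w x < ((g x - f x : ℝ) : EReal) := by
  refine exists_continuous_forall_mem_convex_of_local_const
    (t := fun x => {t : ℝ | v x < t ∧ w x < ((g x - t : ℝ) : EReal)}) (fun x => ?_) fun x => ?_
  · refine Set.OrdConnected.convex ⟨?_⟩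
    rintro a ⟨ha, -⟩ b ⟨-, hb⟩ t ⟨hat, htb⟩
    exact ⟨ha.trans_le (by exact_mod_cast hat), hb.trans_le (by norm_cast; linarith)⟩
  · obtain ⟨t, hvt, hwt⟩ := exists_coe_lt_and_lt_coe_sub (hvtop x) (hwtop x) (h x)
    obtain ⟨s, hws, hst⟩ := EReal.lt_iff_exists_real_btwn.1 hwt
    have hg : ∀ᶠ y in nhds x, s < g y - t :=
      (g.continuous.sub continuous_const).continuousAt.eventually_const_lt
        (EReal.coe_lt_coe_iff.1 hst)
    refine ⟨t, ?_⟩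
    filter_upwards [hv x _ hvt, hw x _ hws, hg] with y hvy hwy hgy
    exact ⟨hvy, hwy.trans (EReal.coe_lt_coe_iff.2 hgy)⟩

lemma exists_abs_eval_sub_lt {σ : Type*} {S : Set (σ → ℝ)} (hS : IsCompact S) (f : C(S, ℝ))
    {η : ℝ} (hη : 0 < η) : ∃ p : MvPolynomial σ ℝ, ∀ x : S, |eval x.1 p - f x| < η := by
  have : CompactSpace S := isCompact_iff_compactSpace.1 hS
  let coord (i : σ) : C(S, ℝ) :=
    ⟨fun x => x.1 i, (continuous_apply i).comp continuous_subtype_val⟩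
  have heval (p : MvPolynomial σ ℝ) (x : S) : aeval coord p x = eval x.1 p := by
    induction p using MvPolynomial.induction_on with
    | C a => simp
    | add p q hp hq => simp [hp, hq]
    | mul_X p j hp => simp [hp, coord]
  have hsep : (aeval coord : MvPolynomial σ ℝ →ₐ[ℝ] C(S, ℝ)).range.SeparatesPoints := by
    intro x y hxy
    obtain ⟨i, hi⟩ := Function.ne_iff.1 (Subtype.coe_injective.ne hxy)
    exact ⟨_, ⟨aeval coord (X i), ⟨_, rfl⟩, rfl⟩, by simpa [heval, coord] using hi⟩
  obtain ⟨⟨_, p, rfl⟩, hp⟩ :=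
    ContinuousMap.exists_mem_subalgebra_near_continuous_of_separatesPoints _ hsep f f.continuous
      η hη
  refine ⟨p, fun x => ?_⟩
  simpa only [AlgHom.toRingHom_eq_coe, RingHom.coe_coe, heval, Real.norm_eq_abs] using hp x

lemma exists_eval_gt_and_eval_add_eval_lt {σ : Type*} {S : Set (σ → ℝ)} (hS : IsCompact S)
    {v w : (σ → ℝ) → EReal} (hvtop : ∀ x ∈ S, v x ≠ ⊤) (hwtop : ∀ x ∈ S, w x ≠ ⊤)
    (hv : UpperSemicontinuousOn v S) (hw : UpperSemicontinuousOn w S)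
    {g : (σ → ℝ) → ℝ} (hg : ContinuousOn g S) (h : ∀ x ∈ S, v x + w x < g x)
    {η : ℝ} (hη : 0 < η) :
    ∃ p q : MvPolynomial σ ℝ, ∀ x ∈ S,
      v x < eval x p ∧ w x < eval x q ∧ eval x p + eval x q < g x + η := by
  have : CompactSpace S := isCompact_iff_compactSpace.1 hS
  obtain ⟨g', hg'⟩ : ∃ g' : C(S, ℝ), ∀ x, g' x = g x := ⟨⟨_, hg.domRestrict⟩, fun _ => rfl⟩
  obtain ⟨f, hf⟩ := exists_continuousMap_lt_and_lt_sub (fun x : S => hvtop x x.2)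
    (fun x => hwtop x x.2) (upperSemicontinuousOn_iff_restrict.2 hv)
    (upperSemicontinuousOn_iff_restrict.2 hw) g' fun x => hg' x ▸ h x x.2
  obtain ⟨p, hp⟩ := exists_abs_eval_sub_lt hS (f + .const _ (η / 4)) (η := η / 4) (by positivity)
  obtain ⟨q, hq⟩ := exists_abs_eval_sub_lt hS (g' - f + .const _ (η / 4)) (η := η / 4)
    (by positivity)
  refine ⟨p, q, fun x hx => ?_⟩
  obtain ⟨hvf, hwf⟩ := hf ⟨x, hx⟩
  have hpx := abs_lt.1 (hp ⟨x, hx⟩)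
  have hqx := abs_lt.1 (hq ⟨x, hx⟩)
  simp only [ContinuousMap.add_apply, ContinuousMap.sub_apply, ContinuousMap.const_apply, hg']
    at hpx hqx hwf
  exact ⟨hvf.trans (EReal.coe_lt_coe_iff.2 (by linarith)),
    hwf.trans (EReal.coe_lt_coe_iff.2 (by linarith)), by linarith⟩

end Approximation

section Separation

variable {m : ℕ} {F : Set (Matrix (Fin m) (Fin m) ℝ)} {A B : Matrix (Fin m) (Fin m) ℝ}

lemma eventually_mem_symInterior (hA : A ∈ symInterior F) :
    ∀ᶠ B in nhds A, B.IsSymm → B ∈ symInterior F := by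
  filter_upwards [eventually_eventually_nhds.2 hA.2] with B hB hsymm using ⟨hsymm, hB⟩

lemma exists_le_smul_one (hA : A.IsSymm) : ∃ k : ℝ, A ≤ k • 1 := by
  obtain ⟨k, hk⟩ := A.finite_real_spectrum.bddAbove
  exact ⟨k, Algebra.algebraMap_eq_smul_one (A := Matrix (Fin m) (Fin m) ℝ) k ▸
    le_algebraMap_of_spectrum_le hk (isHermitian_iff_isSymm.2 hA)⟩

lemma exists_continuousLinearMap_lt_of_notMem_symInterior (hconv : Convex ℝ (symInterior F))
    (hA : A.IsSymm) (hAF : A ∉ symInterior F) :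
    ∃ f : Matrix (Fin m) (Fin m) ℝ →L[ℝ] ℝ, ∀ B ∈ symInterior F, f A < f B := by
  let σ : Matrix (Fin m) (Fin m) ℝ →ₗ[ℝ] Matrix (Fin m) (Fin m) ℝ :=
    (selfAdjoint.submodule ℝ _).subtype ∘ₗ selfAdjointPart ℝ
  have hσ {B : Matrix (Fin m) (Fin m) ℝ} (hB : B.IsSymm) : σ B = B :=
    IsSelfAdjoint.coe_selfAdjointPart_apply ℝ (isHermitian_iff_isSymm.2 hB)
  have hσsymm (B : Matrix (Fin m) (Fin m) ℝ) : (σ B).IsSymm :=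
    isHermitian_iff_isSymm.1 (selfAdjointPart ℝ B).2
  have hopen : IsOpen (σ ⁻¹' symInterior F) := isOpen_iff_mem_nhds.2 fun B hB =>
    (σ.continuous_of_finiteDimensional.continuousAt.eventually
      (eventually_mem_symInterior hB)).mono fun C hC => hC (hσsymm C)
  have hAG : A ∉ σ ⁻¹' symInterior F := by rwa [Set.mem_preimage, hσ hA]
  obtain ⟨f, hf⟩ := geometric_hahn_banach_point_open (hconv.linear_preimage σ) hopen hAG
  exact ⟨f, fun B hB => hf B (by rwa [Set.mem_preimage, hσ hB.1])⟩

lemma monotone_of_forall_mem_lt (hup : IsUpperSet (symInterior F))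
    (hne : (symInterior F).Nonempty) {l : Matrix (Fin m) (Fin m) ℝ →ₗ[ℝ] ℝ} {b : ℝ}
    (hl : ∀ A ∈ symInterior F, b < l A) : Monotone l := by
  obtain ⟨A, hA⟩ := hne
  intro B C hBC
  by_contra! hlt
  set k := (l A - b) / (l B - l C) with hk
  have hk0 : 0 ≤ k := div_nonneg (sub_nonneg.2 (hl A hA).le) (sub_nonneg.2 hlt.le)
  have hmem : A + k • (C - B) ∈ symInterior F :=
    hup (le_add_of_nonneg_right (smul_nonneg hk0 (sub_nonneg.2 hBC))) hA
  have hval : l (A + k • (C - B)) = b := by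
    have hne : l B - l C ≠ 0 := (sub_pos.2 hlt).ne'
    simp only [map_add, map_smul, map_sub, smul_eq_mul, hk]
    field_simp
    ring
  exact (hl _ hmem).ne' hval

lemma exists_monotone_lt_of_notMem_symInterior [NeZero m] (hconv : Convex ℝ (symInterior F))
    (hup : IsUpperSet (symInterior F)) (hA : A.IsSymm) (hAF : A ∉ symInterior F) :
    ∃ l : Matrix (Fin m) (Fin m) ℝ →ₗ[ℝ] ℝ,
      Monotone l ∧ 0 < l 1 ∧ ∀ B ∈ symInterior F, l A < l B := by
  rcases (symInterior F).eq_empty_or_nonempty with hempty | ⟨B, hB⟩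
  · refine ⟨Matrix.traceLinearMap _ ℝ ℝ, fun C D hCD => ?_, ?_, by simp [hempty]⟩
    · simpa using (Matrix.le_iff.1 hCD).trace_nonneg
    · simpa using NeZero.pos m
  obtain ⟨f, hf⟩ := exists_continuousLinearMap_lt_of_notMem_symInterior hconv hA hAF
  have hmono : Monotone f := monotone_of_forall_mem_lt (l := f.toLinearMap) hup ⟨B, hB⟩ hf
  refine ⟨f.toLinearMap, hmono, ?_, hf⟩
  obtain ⟨k, hk⟩ := exists_le_smul_one (hB.1.sub hA)
  have hpos : 0 < k * f 1 := calc
    0 < f B - f A := sub_pos.2 (hf B hB)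
    _ = f (B - A) := (map_sub f B A).symm
    _ ≤ f (k • 1) := hmono hk
    _ = k * f 1 := by rw [map_smul, smul_eq_mul]
  have hnonneg : 0 ≤ f 1 := by simpa using hmono (zero_le_one (α := Matrix (Fin m) (Fin m) ℝ))
  exact hnonneg.lt_of_ne' (right_ne_zero_of_mul hpos.ne')

end Separation

section Comparison

open MvPolynomial

variable {m : ℕ} {F : Set (Matrix (Fin m) (Fin m) ℝ)} {U K : Set (Fin m → ℝ)}
  {u v w : (Fin m → ℝ) → EReal} {ψ : (Fin m → ℝ) → ℝ} {x z : Fin m → ℝ}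

lemma add_coe_le_coe_iff {e : EReal} {r s : ℝ} : e + r ≤ s ↔ e ≤ ((s - r : ℝ) : EReal) := by
  rw [EReal.coe_sub, EReal.le_sub_iff_add_le] <;> simp

lemma coe_half_mul_le_coe_iff {e : EReal} {s : ℝ} :
    ((1 / 2 : ℝ) : EReal) * e ≤ s ↔ e ≤ ((2 * s : ℝ) : EReal) := by
  induction e with
  | bot => simp [EReal.coe_mul_bot_of_pos]
  | top => simp [EReal.coe_mul_top_of_pos, -EReal.coe_mul]
  | coe a => norm_cast; constructor <;> intro h <;> linarith

lemma IsTypeF.le_of_frontier_le (hu : IsTypeF F U u) (hψ : ∀ y ∈ U, ContDiffAt ℝ 2 ψ y)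
    (hF : ∀ y ∈ U, hessianMatrix ψ y ∉ symInterior F) (hK : IsCompact K) (hKU : K ⊆ U)
    (hfr : ∀ y ∈ frontier K, u y ≤ ψ y) (hx : x ∈ K) : u x ≤ ψ x := by
  have hsub := hu.2.2 (fun y => -ψ y) (fun y hy => (hψ y hy).neg.contDiffWithinAt)
    fun y hy => ⟨isSymm_hessianMatrix (hψ y hy).neg, by simpa [hessianMatrix_neg] using hF y hy⟩
  have hle := hsub 0 K hK hKU (fun y hy => add_coe_le_coe_iff.2 (by simpa using hfr y hy)) x hx
  simpa using add_coe_le_coe_iff.1 hle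

lemma isTypeF_of_forall_le_of_frontier_le (hU : IsOpen U) (htop : ∀ x ∈ U, u x ≠ ⊤)
    (husc : UpperSemicontinuousOn u U)
    (hcomp : ∀ ψ : (Fin m → ℝ) → ℝ, (∀ y ∈ U, ContDiffAt ℝ 2 ψ y) →
      (∀ y ∈ U, hessianMatrix ψ y ∉ symInterior F) → ∀ K, IsCompact K → K ⊆ U →
      (∀ y ∈ frontier K, u y ≤ ψ y) → ∀ x ∈ K, u x ≤ ψ x) : IsTypeF F U u := by
  refine ⟨htop, husc, fun φ hφ hφF a K hK hKU hfr x hx => ?_⟩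
  have hφ' (y) (hy : y ∈ U) : ContDiffAt ℝ 2 φ y := hφ.contDiffAt (hU.mem_nhds hy)
  simp only [add_coe_le_coe_iff] at hfr ⊢
  refine hcomp (fun y => a y - φ y) (fun y hy => (contDiff_affineMap a).contDiffAt.sub (hφ' y hy))
    (fun y hy => ?_) K hK hKU hfr x hx
  rw [hessianMatrix_sub (contDiff_affineMap a).contDiffAt (hφ' y hy), hessianMatrix_affineMap,
    zero_sub]
  exact (hφF y hy).2

lemma upperSemicontinuousOn_add (hu : ∀ x ∈ U, u x ≠ ⊤) (hv : ∀ x ∈ U, v x ≠ ⊤)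
    (hu' : UpperSemicontinuousOn u U) (hv' : UpperSemicontinuousOn v U) :
    UpperSemicontinuousOn (fun x => u x + v x) U :=
  hu'.add' hv' fun x hx => EReal.continuousAt_add (.inl (hu x hx)) (.inr (hv x hx))

lemma IsTypeF.exists_le_eval_of_sphere_le {l : Matrix (Fin m) (Fin m) ℝ →ₗ[ℝ] ℝ} {b R : ℝ}
    (hv : IsTypeF F U v) (hl : Monotone l) (hl1 : 0 < l 1)
    (hb : ∀ A ∈ symInterior F, b < l A) (hR : 0 < R) (hBU : {x | sqDist z x ≤ R} ⊆ U)
    (p : MvPolynomial (Fin m) ℝ) (hp : ∀ x, sqDist z x = R → v x ≤ eval x p) :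
    ∃ P : MvPolynomial (Fin m) ℝ, (∀ x, sqDist z x = R → eval x P = eval x p) ∧
      (∀ x, l (hessianMatrix (fun y => eval y P) x) = b) ∧
      ∀ x ∈ {x | sqDist z x ≤ R}, v x ≤ eval x P := by
  obtain ⟨P, hP, hlP⟩ := exists_eval_eq_on_sphere_and_hessianOperator_eq hl hl1 hR z p (C b)
  have hlP' (x) : l (hessianMatrix (fun y => eval y P) x) = b := by
    rw [← eval_hessianOperator, hlP, eval_C]
  refine ⟨P, hP, hlP', fun x hx => ?_⟩
  refine hv.le_of_frontier_le (fun y _ => (contDiff_eval P).contDiffAt)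
    (fun y _ hy => (hb _ hy).ne' (hlP' y)) (isCompact_setOf_sqDist_le z R) hBU (fun y hy => ?_) hx
  have hyR := sqDist_eq_of_mem_frontier hy
  exact hP y hyR ▸ hp y hyR

lemma IsTypeF.add_le_of_sphere_lt {l : Matrix (Fin m) (Fin m) ℝ →ₗ[ℝ] ℝ} {b R M : ℝ}
    (hv : IsTypeF F U v) (hw : IsTypeF F U w) (hl : Monotone l) (hl1 : 0 < l 1)
    (hb : ∀ A ∈ symInterior F, b < l A) (hR : 0 < R) (hBU : {x | sqDist z x ≤ R} ⊆ U)
    (hψ : ∀ x ∈ {x | sqDist z x ≤ R}, ContDiffAt ℝ 2 ψ x)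
    (hlψ : ∀ x ∈ {x | sqDist z x ≤ R}, l (hessianMatrix ψ x) ≤ 2 * b)
    (hS : ∀ x ∈ {x | sqDist z x = R}, v x + w x < ((ψ x + M : ℝ) : EReal))
    (hx : x ∈ {x | sqDist z x ≤ R}) : v x + w x ≤ ((ψ x + M : ℝ) : EReal) := by
  set B := {x | sqDist z x ≤ R}
  set S := {x | sqDist z x = R}
  have hB : IsCompact B := isCompact_setOf_sqDist_le z R
  have hSB : S ⊆ B := fun y hy => le_of_eq hy
  have hS' : IsCompact S := hB.of_isClosed_subset
    (isClosed_eq (contDiff_sqDist z (k := 0)).continuous continuous_const) hSB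
  have hfr : frontier B ⊆ S := fun y hy => sqDist_eq_of_mem_frontier hy
  refine EReal.le_of_forall_lt_iff_le.1 fun s hs => ?_
  have hη : 0 < s - (ψ x + M) := sub_pos.2 (EReal.coe_lt_coe_iff.1 hs)
  obtain ⟨p, q, hpq⟩ := exists_eval_gt_and_eval_add_eval_lt hS'
    (fun y hy => hv.1 y (hBU (hSB hy))) (fun y hy => hw.1 y (hBU (hSB hy)))
    (hv.2.1.mono (hSB.trans hBU)) (hw.2.1.mono (hSB.trans hBU)) (g := fun y => ψ y + M)
    (fun y hy => ((hψ y (hSB hy)).continuousAt.add continuousAt_const).continuousWithinAt) hS hη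
  obtain ⟨P, hP, hlP, hvP⟩ :=
    hv.exists_le_eval_of_sphere_le hl hl1 hb hR hBU p fun y hy => (hpq y hy).1.le
  obtain ⟨Q, hQ, hlQ, hwQ⟩ :=
    hw.exists_le_eval_of_sphere_le hl hl1 hb hR hBU q fun y hy => (hpq y hy).2.1.le
  have hPQ (y) : ContDiffAt ℝ 2 (fun y => eval y P + eval y Q) y :=
    (contDiff_eval P).contDiffAt.add (contDiff_eval Q).contDiffAt
  have hmax := le_of_frontier_le_of_hessianMatrix_nonneg
    (f := fun y => (eval y P + eval y Q) - ψ y) (M := s - ψ x) hl hl1 hB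
    (fun y hy => (hPQ y).sub (hψ y hy)) (fun y hy => ?_) (fun y hy => ?_) hx
  · refine (add_le_add (hvP x hx) (hwQ x hx)).trans ?_
    norm_cast
    linarith
  · rw [hessianMatrix_sub (hPQ y) (hψ y hy), hessianMatrix_add (contDiff_eval P).contDiffAt
      (contDiff_eval Q).contDiffAt, map_sub, map_add, hlP, hlQ]
    linarith [hlψ y hy]
  · have hlt := (hpq y (hfr hy)).2.2
    rw [← hP y (hfr hy), ← hQ y (hfr hy)] at hlt
    linarith

variable [NeZero m]

lemma IsTypeF.half_hessianMatrix_add_smul_mem_symInterior {M κ η : ℝ}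
    (hconv : Convex ℝ (symInterior F)) (hup : IsUpperSet (symInterior F))
    (hU : U ∈ nhds z) (hv : IsTypeF F U v) (hw : IsTypeF F U w) (hψ : ContDiffAt ℝ 2 ψ z)
    (hz : v z + w z = ((ψ z + M : ℝ) : EReal)) (hκ : 0 < κ)
    (htouch : ∀ᶠ x in nhds z, v x + w x ≤ ((ψ x + M - κ * sqDist z x : ℝ) : EReal))
    (hη : 0 < η) : (1 / 2 : ℝ) • hessianMatrix ψ z + η • 1 ∈ symInterior F := by
  by_contra hmem
  have hsymm : ((1 / 2 : ℝ) • hessianMatrix ψ z + η • 1).IsSymm :=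
    ((isSymm_hessianMatrix hψ).smul _).add (Matrix.isSymm_one.smul _)
  obtain ⟨l, hl, hl1, hlF⟩ := exists_monotone_lt_of_notMem_symInterior hconv hup hsymm hmem
  have hlψ : ∀ᶠ x in nhds z,
      l (hessianMatrix ψ x) < 2 * l ((1 / 2 : ℝ) • hessianMatrix ψ z + η • 1) := by
    refine (l.continuous_of_finiteDimensional.continuousAt.comp
      (continuousAt_hessianMatrix hψ)).eventually_lt_const ?_
    simp only [Function.comp_apply, map_add, map_smul, smul_eq_mul]
    nlinarith
  have hψ' : ∀ᶠ x in nhds z, ContDiffAt ℝ 2 ψ x := hψ.eventually (by simp)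
  obtain ⟨R, hR, hball⟩ :=
    exists_setOf_sqDist_le_subset (((eventually_mem_set.2 hU).and hψ').and (hlψ.and htouch))
  have hκR : 0 < κ * R := mul_pos hκ hR
  have hle := hv.add_le_of_sphere_lt (M := M - κ * R / 2) hw hl hl1 hlF hR
    (fun x hx => (hball hx).1.1) (fun x hx => (hball hx).1.2) (fun x hx => (hball hx).2.1.le)
    (fun x hx => ((hball (le_of_eq hx)).2.2).trans_lt ?_) (x := z) (by simpa using hR.le)
  · rw [hz, EReal.coe_le_coe_iff] at hle
    linarith
  · rw [hx.out, EReal.coe_lt_coe_iff]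
    linarith

lemma IsTypeF.not_isLocalMax_add_add_sqDist {ε : ℝ} (hconv : Convex ℝ (symInterior F))
    (hup : IsUpperSet (symInterior F)) (hU : U ∈ nhds z) (hv : IsTypeF F U v)
    (hw : IsTypeF F U w) (hψ : ContDiffAt ℝ 2 ψ z)
    (hF : (1 / 2 : ℝ) • hessianMatrix ψ z ∉ symInterior F) (hbot : v z + w z ≠ ⊥) (hε : 0 < ε) :
    ¬ IsLocalMax (fun x => v x + w x + ((ε * sqDist 0 x - ψ x : ℝ) : EReal)) z := by
  intro hmax
  obtain ⟨e, he⟩ : ∃ e : ℝ, v z + w z = e := by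
    have htop := EReal.add_ne_top (hv.1 z (mem_of_mem_nhds hU)) (hw.1 z (mem_of_mem_nhds hU))
    exact ⟨_, (EReal.coe_toReal htop hbot).symm⟩
  have hsq (y : Fin m → ℝ) (a : ℝ) : ContDiffAt ℝ 2 (fun x => a * sqDist y x) z :=
    contDiffAt_const.mul (contDiff_sqDist y).contDiffAt
  refine hF ?_
  convert hv.half_hessianMatrix_add_smul_mem_symInterior
    (ψ := fun x => ψ x + (-ε * sqDist 0 x + ε / 2 * sqDist z x))
    (M := e + (ε * sqDist 0 z - ψ z)) (κ := ε / 2) (η := ε / 2) hconv hup hU hw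
    (hψ.add ((hsq 0 _).add (hsq z _))) ?_ (by positivity) ?_ (by positivity) using 1
  · rw [hessianMatrix_add hψ ((hsq 0 _).add (hsq z _)), hessianMatrix_add (hsq 0 _) (hsq z _),
      hessianMatrix_const_mul _ (contDiff_sqDist 0).contDiffAt,
      hessianMatrix_const_mul _ (contDiff_sqDist z).contDiffAt, hessianMatrix_sqDist,
      hessianMatrix_sqDist]
    module
  · rw [he, sqDist_self, EReal.coe_eq_coe_iff]
    ring
  · filter_upwards [hmax] with x hx
    rw [he, ← EReal.coe_add, add_coe_le_coe_iff] at hx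
    exact hx.trans (EReal.coe_le_coe_iff.2 (by linarith))

lemma IsTypeF.add_le_of_frontier_le (hconv : Convex ℝ (symInterior F))
    (hup : IsUpperSet (symInterior F)) (hU : IsOpen U) (hv : IsTypeF F U v) (hw : IsTypeF F U w)
    (hψ : ∀ y ∈ U, ContDiffAt ℝ 2 ψ y)
    (hF : ∀ y ∈ U, (1 / 2 : ℝ) • hessianMatrix ψ y ∉ symInterior F) (hK : IsCompact K)
    (hKU : K ⊆ U) (hfr : ∀ y ∈ frontier K, v y + w y ≤ ψ y) (hx : x ∈ K) :
    v x + w x ≤ ψ x := by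
  have htop (y) (hy : y ∈ U) : v y + w y ≠ ⊤ := EReal.add_ne_top (hv.1 y hy) (hw.1 y hy)
  obtain ⟨B, hB⟩ := hK.bddAbove_image (contDiff_sqDist 0 (k := 0)).continuous.continuousOn
  have hBx : 0 ≤ B := (sqDist_nonneg 0 x).trans (hB (Set.mem_image_of_mem _ hx))
  refine EReal.le_of_forall_lt_iff_le.1 fun s hs => ?_
  have hs' : 0 < s - ψ x := sub_pos.2 (EReal.coe_lt_coe_iff.1 hs)
  set ε := (s - ψ x) / (B + 1) with hε
  have hε0 : 0 < ε := by positivity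
  have hεB : ε * B ≤ s - ψ x := by rw [hε, div_mul_eq_mul_div, div_le_iff₀] <;> nlinarith
  have hcont : ContinuousOn (fun y => ε * sqDist 0 y - ψ y) U := fun y hy =>
    ((contDiff_sqDist 0 (k := 0)).continuous.continuousAt.const_mul ε).sub
      (hψ y hy).continuousAt |>.continuousWithinAt
  have husc : UpperSemicontinuousOn
      (fun y => v y + w y + ((ε * sqDist 0 y - ψ y : ℝ) : EReal)) U :=
    upperSemicontinuousOn_add htop (fun y _ => EReal.coe_ne_top _)
      (upperSemicontinuousOn_add hv.1 hw.1 hv.2.1 hw.2.1)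
      (continuous_coe_real_ereal.comp_continuousOn hcont).upperSemicontinuousOn
  obtain ⟨y, hyK, hmax⟩ := (husc.mono hKU).exists_isMaxOn ⟨x, hx⟩ hK
  have hy : v y + w y ≤ ψ y := by
    by_cases hbot : v y + w y = ⊥
    · simp [hbot]
    refine hfr y ⟨subset_closure hyK, fun hint => ?_⟩
    exact hv.not_isLocalMax_add_add_sqDist hconv hup (hU.mem_nhds (hKU hyK)) hw (hψ y (hKU hyK))
      (hF y (hKU hyK)) hbot hε0 (hmax.isLocalMax (mem_interior_iff_mem_nhds.1 hint))
  have hle : v x + w x + ((ε * sqDist 0 x - ψ x : ℝ) : EReal) ≤ ((ε * B : ℝ) : EReal) := calc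
    _ ≤ v y + w y + ((ε * sqDist 0 y - ψ y : ℝ) : EReal) := hmax hx
    _ ≤ ψ y + ((ε * sqDist 0 y - ψ y : ℝ) : EReal) := by gcongr
    _ = ((ε * sqDist 0 y : ℝ) : EReal) := by norm_cast; ring
    _ ≤ ((ε * B : ℝ) : EReal) := EReal.coe_le_coe_iff.2
      (mul_le_mul_of_nonneg_left (hB (Set.mem_image_of_mem _ hyK)) hε0.le)
  rw [add_coe_le_coe_iff] at hle
  have hsq := mul_nonneg hε0.le (sqDist_nonneg 0 x)
  exact hle.trans (EReal.coe_le_coe_iff.2 (by linarith))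

lemma IsTypeF.half_add (hconv : Convex ℝ (symInterior F)) (hup : IsUpperSet (symInterior F))
    (hU : IsOpen U) (hv : IsTypeF F U v) (hw : IsTypeF F U w) :
    IsTypeF F U (fun x => ((1 / 2 : ℝ) : EReal) * (v x + w x)) := by
  have htop (x) (hx : x ∈ U) : v x + w x ≠ ⊤ := EReal.add_ne_top (hv.1 x hx) (hw.1 x hx)
  have hhalf : (0 : EReal) < ((1 / 2 : ℝ) : EReal) := EReal.coe_pos.2 (by norm_num)
  refine isTypeF_of_forall_le_of_frontier_le hU (fun x hx => ?_) ?_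
    fun ψ hψ hF K hK hKU hfr x hx => ?_
  · simp [EReal.mul_ne_top, htop x hx]
  · have hcont : Continuous fun e : EReal => ((1 / 2 : ℝ) : EReal) * e := by
      refine continuous_iff_continuousAt.2 fun e => ?_
      exact (EReal.continuousAt_mul (p := (_, e)) (.inl hhalf.ne') (.inl hhalf.ne')
        (.inl (EReal.coe_ne_bot _)) (.inl (EReal.coe_ne_top _))).comp (by fun_prop)
    exact hcont.comp_upperSemicontinuousOn (upperSemicontinuousOn_add hv.1 hw.1 hv.2.1 hw.2.1)
      fun a b hab => mul_le_mul_of_nonneg_left hab hhalf.le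
  · simp only [coe_half_mul_le_coe_iff] at hfr ⊢
    refine hv.add_le_of_frontier_le (ψ := fun y => 2 * ψ y) hconv hup hU hw
      (fun y hy => contDiffAt_const.mul (hψ y hy)) (fun y hy => ?_) hK hKU hfr hx
    rw [hessianMatrix_const_mul _ (hψ y hy), smul_smul]
    simpa using hF y hy

end Comparison

section TraceInequality

open scoped ComplexOrder

variable {ι 𝕜 : Type*} [RCLike 𝕜] [Fintype ι] [DecidableEq ι] {A B C : Matrix ι ι 𝕜}

lemma re_dotProduct_mulVec_eq_sum_eigenvalues (hA : A.IsHermitian) (x : EuclideanSpace 𝕜 ι) :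
    RCLike.re (star x.ofLp ⬝ᵥ A *ᵥ x.ofLp) =
      ∑ k, ‖inner 𝕜 (hA.eigenvectorBasis k) x‖ ^ 2 * hA.eigenvalues k := by
  have hinner (k : ι) : inner 𝕜 (hA.eigenvectorBasis k) (toEuclideanLin A x) =
      hA.eigenvalues k * inner 𝕜 (hA.eigenvectorBasis k) x := by
    have heig : toEuclideanLin A (hA.eigenvectorBasis k) =
        (hA.eigenvalues k : 𝕜) • hA.eigenvectorBasis k := by
      ext i
      simpa [toLpLin_apply, RCLike.real_smul_eq_coe_mul] using
        congrFun (hA.mulVec_eigenvectorBasis k) i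
    rw [← isSymmetric_toEuclideanLin_iff.2 hA, heig, inner_smul_left, RCLike.conj_ofReal]
  have hquad : star x.ofLp ⬝ᵥ A *ᵥ x.ofLp = inner 𝕜 x (toEuclideanLin A x) := by
    rw [EuclideanSpace.inner_eq_star_dotProduct, dotProduct_comm, toLpLin_apply]
  rw [hquad, ← hA.eigenvectorBasis.sum_inner_mul_inner, map_sum]
  refine Finset.sum_congr rfl fun k _ => ?_
  rw [hinner, mul_left_comm, RCLike.re_ofReal_mul, inner_mul_symm_re_eq_norm, norm_mul,
    norm_inner_symm, ← sq, mul_comm]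

/-- Peierls' inequality. -/
lemma sum_concave_eigenvalues_le {S : Set ℝ} {f : ℝ → ℝ} (hf : ConcaveOn ℝ S f)
    (hA : A.IsHermitian) (hS : ∀ k, hA.eigenvalues k ∈ S)
    (b : OrthonormalBasis ι 𝕜 (EuclideanSpace 𝕜 ι)) :
    ∑ k, f (hA.eigenvalues k) ≤
      ∑ j, f (RCLike.re (star (b j).ofLp ⬝ᵥ A *ᵥ (b j).ofLp)) := by
  have hjensen (j : ι) : ∑ k, ‖inner 𝕜 (hA.eigenvectorBasis k) (b j)‖ ^ 2 * f (hA.eigenvalues k) ≤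
      f (RCLike.re (star (b j).ofLp ⬝ᵥ A *ᵥ (b j).ofLp)) := by
    rw [re_dotProduct_mulVec_eq_sum_eigenvalues hA]
    refine hf.le_map_sum (fun k _ => sq_nonneg _) ?_ fun k _ => hS k
    rw [hA.eigenvectorBasis.sum_sq_norm_inner_right, b.norm_eq_one, one_pow]
  refine le_of_eq_of_le ?_ (Finset.sum_le_sum fun j _ => hjensen j)
  rw [Finset.sum_comm]
  refine Finset.sum_congr rfl fun k _ => ?_
  rw [← Finset.sum_mul, b.sum_sq_norm_inner_left, hA.eigenvectorBasis.norm_eq_one, one_pow,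
    one_mul]

lemma smul_sum_eigenvalues_add_le {f : ℝ → ℝ} (hf : ConcaveOn ℝ (Set.Ici 0) f)
    (hmono : MonotoneOn f (Set.Ici 0)) (hA : A.PosSemidef) (hB : B.PosSemidef)
    (hC : C.IsHermitian) {s t : ℝ} (hs : 0 ≤ s) (ht : 0 ≤ t) (hst : s + t = 1)
    (hle : s • A + t • B ≤ C) :
    s * ∑ k, f (hA.isHermitian.eigenvalues k) + t * ∑ k, f (hB.isHermitian.eigenvalues k) ≤
      ∑ k, f (hC.eigenvalues k) := by
  let q (M : Matrix ι ι 𝕜) (k : ι) : ℝ :=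
    RCLike.re (star (hC.eigenvectorBasis k).ofLp ⬝ᵥ M *ᵥ (hC.eigenvectorBasis k).ofLp)
  have hqA (k : ι) : q A k ∈ Set.Ici 0 := hA.re_dotProduct_nonneg _
  have hqB (k : ι) : q B k ∈ Set.Ici 0 := hB.re_dotProduct_nonneg _
  have hqC (k : ι) : s * q A k + t * q B k ≤ q C k := by
    have h := (Matrix.le_iff.1 hle).re_dotProduct_nonneg (hC.eigenvectorBasis k).ofLp
    simpa only [sub_mulVec, add_mulVec, smul_mulVec, dotProduct_sub, dotProduct_add,
      dotProduct_smul, map_sub, map_add, RCLike.smul_re, sub_nonneg] using h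
  have hq0 (k : ι) : s * q A k + t * q B k ∈ Set.Ici 0 :=
    convex_Ici 0 (hqA k) (hqB k) hs ht hst
  calc s * ∑ k, f (hA.isHermitian.eigenvalues k) + t * ∑ k, f (hB.isHermitian.eigenvalues k)
      ≤ s * ∑ k, f (q A k) + t * ∑ k, f (q B k) :=
        add_le_add
          (mul_le_mul_of_nonneg_left
            (sum_concave_eigenvalues_le hf _ hA.eigenvalues_nonneg _) hs)
          (mul_le_mul_of_nonneg_left
            (sum_concave_eigenvalues_le hf _ hB.eigenvalues_nonneg _) ht)
    _ = ∑ k, (s * f (q A k) + t * f (q B k)) := by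
        rw [Finset.mul_sum, Finset.mul_sum, Finset.sum_add_distrib]
    _ ≤ ∑ k, f (hC.eigenvalues k) := by
        refine Finset.sum_le_sum fun k _ => (hf.2 (hqA k) (hqB k) hs ht hst).trans ?_
        rw [hC.eigenvalues_eq]
        exact hmono (hq0 k) ((hq0 k).out.trans (hqC k)) (hqC k)

lemma trace_cfc (hA : A.IsHermitian) (f : ℝ → ℝ) :
    (cfc f A).trace = ∑ k, (f (hA.eigenvalues k) : 𝕜) := by
  rw [hA.cfc_eq, IsHermitian.cfc, Unitary.conjStarAlgAut_apply, trace_mul_cycle]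
  simp [trace_diagonal]

end TraceInequality

section LiftedAngle

open scoped Matrix.Norms.L2Operator

lemma concaveOn_arctan : ConcaveOn ℝ (Set.Ici 0) arctan := by
  refine AntitoneOn.concaveOn_of_deriv (convex_Ici 0) continuous_arctan.continuousOn
    differentiable_arctan.differentiableOn ?_
  rw [interior_Ici, Real.deriv_arctan]
  intro x hx y _ hxy
  have hx0 : 0 ≤ x := (Set.mem_Ioi.1 hx).le
  beta_reduce
  gcongr

lemma arg_one_add_I_mul_ofReal (x : ℝ) : Complex.arg (1 + Complex.I * x) = arctan x := by
  rw [Complex.arg_of_re_nonneg (by simp), arctan_eq_arcsin]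
  simp [Complex.norm_def, Complex.normSq_apply, sq]

variable {m : ℕ} {A B C : Matrix (Fin m) (Fin m) ℝ}

lemma liftedAngle_eq_sum_arctan (hA : A.IsHermitian) :
    liftedAngle A = ∑ k, arctan (hA.eigenvalues k) :=
  dif_pos hA

lemma smul_liftedAngle_add_le (hA : A.PosSemidef) (hB : B.PosSemidef) (hC : C.IsHermitian)
    {s t : ℝ} (hs : 0 ≤ s) (ht : 0 ≤ t) (hst : s + t = 1) (hle : s • A + t • B ≤ C) :
    s * liftedAngle A + t * liftedAngle B ≤ liftedAngle C := by
  rw [liftedAngle_eq_sum_arctan hA.isHermitian, liftedAngle_eq_sum_arctan hB.isHermitian,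
    liftedAngle_eq_sum_arctan hC]
  exact smul_sum_eigenvalues_add_le concaveOn_arctan (arctan_mono.monotoneOn _) hA hB hC
    hs ht hst hle

lemma isHermitian_map_ofReal (hA : A.IsHermitian) : (A.map Complex.ofReal).IsHermitian :=
  hA.map _ fun _ => (Complex.conj_ofReal _).symm

lemma eigenvalues_map_ofReal (hA : A.IsHermitian) :
    (isHermitian_map_ofReal hA).eigenvalues = hA.eigenvalues := by
  have hroots : (A.map Complex.ofReal).charpoly.roots = A.charpoly.roots.map Complex.ofReal :=
    (congrArg _ (A.charpoly_map Complex.ofRealHom)).trans (hA.splits_charpoly.roots_map _)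
  have hsorted : (isHermitian_map_ofReal hA).eigenvalues₀ = hA.eigenvalues₀ := by
    rw [← List.ofFn_inj, ← IsHermitian.sort_roots_charpoly_eq_eigenvalues₀,
      ← IsHermitian.sort_roots_charpoly_eq_eigenvalues₀, hroots, Multiset.map_map]
    rfl
  unfold IsHermitian.eigenvalues
  rw [hsorted]

lemma liftedAngle_eq_trace_cfc (hA : A.IsHermitian) :
    (liftedAngle A : ℂ) = (cfc arctan (A.map Complex.ofReal)).trace := by
  rw [trace_cfc (isHermitian_map_ofReal hA), eigenvalues_map_ofReal, liftedAngle_eq_sum_arctan hA]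
  exact Complex.ofReal_sum _ _

lemma continuousOn_liftedAngle :
    ContinuousOn (liftedAngle (m := m)) {A | A.IsHermitian} := by
  have hcfc : ContinuousOn (fun A : Matrix (Fin m) (Fin m) ℝ => cfc arctan (A.map Complex.ofReal))
      {A | A.IsHermitian} := by
    refine ContinuousOn.cfc_of_mem_nhdsSet (s := Set.univ) arctan univ_mem ?_
      (fun A hA => isHermitian_map_ofReal hA) continuous_arctan.continuousOn
    exact (continuous_id.matrix_map Complex.continuous_ofReal).continuousOn
  have htrace : ContinuousOn
      (fun A : Matrix (Fin m) (Fin m) ℝ => (cfc arctan (A.map Complex.ofReal)).trace.re)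
      {A | A.IsHermitian} :=
    (Complex.continuous_re.comp continuous_id.matrix_trace).comp_continuousOn hcfc
  exact htrace.congr fun A hA => by
    beta_reduce
    rw [← liftedAngle_eq_trace_cfc hA, Complex.ofReal_re]

lemma smul_one_le_of_le_liftedAngle {n : ℕ} {A : Matrix (Fin (n + 1)) (Fin (n + 1)) ℝ}
    (hA : A.IsHermitian) {μ : ℝ} (hμ : n * (π / 2) + arctan μ ≤ liftedAngle A) : μ • 1 ≤ A := by
  have heig (k : Fin (n + 1)) : μ ≤ hA.eigenvalues k := by
    have hothers : ∑ j ∈ Finset.univ.erase k, arctan (hA.eigenvalues j) ≤ n * (π / 2) := by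
      refine (Finset.sum_le_card_nsmul _ _ _ fun j _ => (arctan_lt_pi_div_two _).le).trans_eq ?_
      rw [Finset.card_erase_of_mem (Finset.mem_univ k), Finset.card_fin, Nat.add_sub_cancel,
        nsmul_eq_mul]
    rw [liftedAngle_eq_sum_arctan hA, ← Finset.sum_erase_add _ _ (Finset.mem_univ k)] at hμ
    exact arctan_strictMono.le_iff_le.1 (by linarith)
  rw [← Algebra.algebraMap_eq_smul_one]
  refine (algebraMap_le_iff_le_spectrum hA.isSelfAdjoint).2 ?_
  rw [hA.spectrum_real_eq_range_eigenvalues]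
  exact Set.forall_mem_range.2 heig

end LiftedAngle

section Accretive

open scoped ComplexOrder

variable {ι : Type*} [Fintype ι] {P H : Matrix ι ι ℂ}

lemma re_dotProduct_add_I_smul_mulVec (hH : H.IsHermitian) (x : ι → ℂ) :
    (star x ⬝ᵥ (P + Complex.I • H) *ᵥ x).re = (star x ⬝ᵥ P *ᵥ x).re := by
  have him : (star x ⬝ᵥ H *ᵥ x).im = 0 := hH.im_star_dotProduct_mulVec_self x
  rw [add_mulVec, smul_mulVec, dotProduct_add, dotProduct_smul, Complex.add_re, smul_eq_mul,
    Complex.I_mul_re, him, neg_zero, add_zero]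

lemma mulVec_eq_zero_of_add_I_smul_mulVec_eq_zero (hP : P.PosSemidef) (hH : H.IsHermitian)
    {x : ι → ℂ} (hx : (P + Complex.I • H) *ᵥ x = 0) : P *ᵥ x = 0 := by
  refine (hP.dotProduct_mulVec_zero_iff x).1 (Complex.ext ?_ ?_)
  · rw [← re_dotProduct_add_I_smul_mulVec hH, hx, dotProduct_zero]
  · exact hP.isHermitian.im_star_dotProduct_mulVec_self x

lemma re_nonneg_of_mem_roots_charpoly_add_I_smul [DecidableEq ι] (hP : P.PosSemidef)
    (hH : H.IsHermitian) {z : ℂ} (hz : z ∈ (P + Complex.I • H).charpoly.roots) : 0 ≤ z.re := by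
  have hdet : (scalar ι z - (P + Complex.I • H)).det = 0 := by
    rw [← eval_charpoly]
    exact Polynomial.isRoot_of_mem_roots hz
  obtain ⟨x, hx, hzx⟩ := exists_mulVec_eq_zero_iff.2 hdet
  have heig : (P + Complex.I • H) *ᵥ x = z • x := by
    rw [sub_mulVec, sub_eq_zero] at hzx
    rw [← hzx, scalar_apply, ← smul_one_eq_diagonal, smul_mulVec, one_mulVec]
  have hpos := Complex.pos_iff.1 (dotProduct_star_self_pos_iff.2 hx)
  have hnonneg : 0 ≤ (star x ⬝ᵥ (P + Complex.I • H) *ᵥ x).re :=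
    (hP.re_dotProduct_nonneg x).trans_eq (re_dotProduct_add_I_smul_mulVec hH x).symm
  rw [heig, dotProduct_smul, smul_eq_mul, Complex.mul_re, ← hpos.2, mul_zero, sub_zero] at hnonneg
  exact nonneg_of_mul_nonneg_left hnonneg hpos.1

end Accretive

section Argument

lemma coe_sum_map_arg (s : Multiset ℂ) (hs : 0 ∉ s) :
    ((s.map Complex.arg).sum : Real.Angle) = Complex.arg s.prod := by
  induction s using Multiset.induction_on with
  | empty => simp
  | cons z s ih =>
    rw [Multiset.mem_cons, not_or] at hs
    rw [Multiset.map_cons, Multiset.sum_cons, Real.Angle.coe_add, ih hs.2, Multiset.prod_cons,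
      Complex.arg_mul_coe_angle (Ne.symm hs.1) (Multiset.prod_ne_zero hs.2)]

lemma det_one_add_smul_eq_prod_roots {ι K : Type*} [Fintype ι] [DecidableEq ι] [Field K]
    [IsAlgClosed K] (M : Matrix ι ι K) (a : K) :
    (1 + a • M).det = (M.charpoly.roots.map fun z => 1 + a * z).prod := by
  rcases eq_or_ne a 0 with rfl | ha
  · simp
  have hsplits := IsAlgClosed.splits M.charpoly
  have hfactor : 1 + a • M = -a • (scalar ι (-a⁻¹) - M) := by
    rw [smul_sub, scalar_apply, ← smul_one_eq_diagonal, smul_smul, neg_mul_neg,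
      mul_inv_cancel₀ ha, one_smul, neg_smul, sub_neg_eq_add]
  rw [hfactor, det_smul, ← eval_charpoly, hsplits.eval_eq_prod_roots_of_monic M.charpoly_monic,
    ← M.charpoly_natDegree_eq_dim, hsplits.natDegree_eq_card_roots, ← Multiset.prod_replicate,
    ← Multiset.map_const', ← Multiset.prod_map_mul]
  refine congrArg _ (Multiset.map_congr rfl fun z _ => ?_)
  rw [mul_sub, neg_mul_neg, mul_inv_cancel₀ ha, neg_mul, sub_neg_eq_add]

lemma one_add_mul_mem_slitPlane {s : ℝ} (hs : 0 ≤ s) {z : ℂ} (hz : 0 ≤ z.re) :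
    1 + s * z ∈ Complex.slitPlane := by
  refine Or.inl ?_
  rw [Complex.add_re, Complex.one_re, Complex.re_ofReal_mul]
  exact add_pos_of_pos_of_nonneg one_pos (mul_nonneg hs hz)

lemma continuousOn_sum_arg_one_add_mul {s : Multiset ℂ} (hs : ∀ z ∈ s, 0 ≤ z.re) :
    ContinuousOn (fun r : ℝ => (s.map fun z => Complex.arg (1 + r * z)).sum) (Set.Ici 0) := by
  refine continuousOn_multiset_sum s fun z hz r hr => ?_
  have hline : ContinuousAt (fun r : ℝ => 1 + (r : ℂ) * z) r := by fun_prop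
  exact (ContinuousAt.comp (f := fun r : ℝ => 1 + (r : ℂ) * z)
    (Complex.continuousAt_arg (one_add_mul_mem_slitPlane hr (hs z hz))) hline).continuousWithinAt

lemma tendsto_sum_arg_one_add_mul {s : Multiset ℂ} (hs : ∀ z ∈ s, 0 ≤ z.re) (hs0 : 0 ∉ s) :
    Tendsto (fun r : ℝ => (s.map fun z => Complex.arg (1 + r * z)).sum) atTop
      (nhds (s.map Complex.arg).sum) := by
  refine tendsto_multiset_sum s fun z hz => ?_
  have hslit : z ∈ Complex.slitPlane := by
    refine (hs z hz).lt_or_eq.imp id fun hre him => hs0 ?_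
    rwa [← Complex.ext (w := 0) hre.symm him]
  have hinv : Tendsto (fun r : ℝ => ((r⁻¹ : ℝ) : ℂ) + z) atTop (nhds z) := by
    simpa using ((Complex.continuous_ofReal.tendsto 0).comp tendsto_inv_atTop_zero).add_const z
  refine ((Complex.continuousAt_arg hslit).tendsto.comp hinv).congr' ?_
  filter_upwards [eventually_gt_atTop 0] with r hr
  have hscale : 1 + (r : ℂ) * z = r * (((r⁻¹ : ℝ) : ℂ) + z) := by
    have hr' : (r : ℂ) ≠ 0 := Complex.ofReal_ne_zero.2 hr.ne'
    push_cast
    field_simp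
  rw [hscale, Complex.arg_real_mul _ hr, Function.comp_apply]

lemma eqOn_of_coe_angle_eq {f g : ℝ → ℝ} (hf : ContinuousOn f (Set.Ici 0))
    (hg : ContinuousOn g (Set.Ici 0)) (hfg : ∀ r ≥ 0, (f r : Real.Angle) = g r)
    (h0 : f 0 = g 0) : Set.EqOn f g (Set.Ici 0) :=
  haveI : Fact (0 < 2 * π) := ⟨two_pi_pos⟩
  (AddCircle.isCoveringMap_coe (2 * π)).eqOn_of_comp_eqOn isPreconnected_Ici hf hg hfg
    Set.self_mem_Ici h0

end Argument

section WeightedAngle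

variable {m : ℕ} {A B C : Matrix (Fin m) (Fin m) ℝ} {d : Fin m → ℝ}

/-- `D^{-1/2} A D^{-1/2}` for the diagonal matrix `D = diagonal d`. -/
noncomputable def weightedConj (d : Fin m → ℝ) (A : Matrix (Fin m) (Fin m) ℝ) :
    Matrix (Fin m) (Fin m) ℝ :=
  diagonal (fun i => (√(d i))⁻¹) * A * diagonal fun i => (√(d i))⁻¹

/-- The lifted Lagrangian angle relative to a diagonal inner product: a continuous branch of
`arg det (diagonal d + i A)`. -/
noncomputable def weightedAngle (d : Fin m → ℝ) (A : Matrix (Fin m) (Fin m) ℝ) : ℝ :=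
  liftedAngle (weightedConj d A)

lemma weightedAngle_zero (d : Fin m → ℝ) : weightedAngle d 0 = 0 := by
  have heig :=
    isHermitian_zero.eigenvalues_eq_zero_iff.2 (rfl : (0 : Matrix (Fin m) (Fin m) ℝ) = 0)
  rw [weightedAngle, weightedConj, mul_zero, zero_mul, liftedAngle_eq_sum_arctan isHermitian_zero,
    heig]
  simp

lemma isHermitian_weightedConj (hA : A.IsSymm) (d : Fin m → ℝ) :
    (weightedConj d A).IsHermitian := by
  have h := isHermitian_conjTranspose_mul_mul (diagonal fun i => (√(d i))⁻¹)
    (isHermitian_iff_isSymm.2 hA)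
  rwa [diagonal_conjTranspose, star_trivial] at h

lemma weightedConj_nonneg (hA : 0 ≤ A) (d : Fin m → ℝ) : 0 ≤ weightedConj d A :=
  ((isHermitian_diagonal _).isSelfAdjoint.conjugate_le_conjugate hA).trans_eq' (by simp)

lemma weightedConj_mono (d : Fin m → ℝ) : Monotone (weightedConj d) := fun _ _ h =>
  (isHermitian_diagonal _).isSelfAdjoint.conjugate_le_conjugate h

lemma smul_weightedAngle_add_le (hA : A.PosSemidef) (hB : B.PosSemidef) (hC : C.IsSymm)
    {s t : ℝ} (hs : 0 ≤ s) (ht : 0 ≤ t) (hst : s + t = 1) (hle : s • A + t • B ≤ C)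
    (d : Fin m → ℝ) :
    s * weightedAngle d A + t * weightedAngle d B ≤ weightedAngle d C := by
  refine smul_liftedAngle_add_le (weightedConj_nonneg hA.nonneg d).posSemidef
    (weightedConj_nonneg hB.nonneg d).posSemidef (isHermitian_weightedConj hC d) hs ht hst ?_
  refine (weightedConj_mono d hle).trans_eq' ?_
  simp only [weightedConj, mul_add, add_mul, mul_smul_comm, smul_mul_assoc]

lemma diagonal_sqrt_mul_weightedConj_mul (hd : ∀ i, 0 < d i) (A : Matrix (Fin m) (Fin m) ℝ) :
    diagonal (fun i => √(d i)) * weightedConj d A * diagonal (fun i => √(d i)) = A := by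
  ext i j
  have hi := (sqrt_pos.2 (hd i)).ne'
  have hj := (sqrt_pos.2 (hd j)).ne'
  simp only [weightedConj, diagonal_mul, mul_diagonal]
  field_simp

lemma smul_diagonal_le_of_le_weightedAngle {n : ℕ} {A : Matrix (Fin (n + 1)) (Fin (n + 1)) ℝ}
    (hA : A.IsSymm) {d : Fin (n + 1) → ℝ} (hd : ∀ i, 0 < d i) {μ : ℝ}
    (hμ : n * (π / 2) + arctan μ ≤ weightedAngle d A) : μ • diagonal d ≤ A := by
  have hone := smul_one_le_of_le_liftedAngle (isHermitian_weightedConj hA d) hμ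
  have hconj := (isHermitian_diagonal fun i => √(d i)).isSelfAdjoint.conjugate_le_conjugate hone
  rw [diagonal_sqrt_mul_weightedConj_mul hd] at hconj
  refine hconj.trans_eq' ?_
  simp only [mul_smul_comm, smul_mul_assoc, mul_one, diagonal_mul_diagonal,
    mul_self_sqrt (hd _).le]

lemma coe_liftedAngle (hA : A.IsHermitian) :
    (liftedAngle A : Real.Angle) =
      Complex.arg (1 + Complex.I • A.map Complex.ofReal).det := by
  have hroots : (A.map Complex.ofReal).charpoly.roots =
      Finset.univ.val.map fun k => (hA.eigenvalues k : ℂ) := by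
    rw [← eigenvalues_map_ofReal hA]
    exact (isHermitian_map_ofReal hA).roots_charpoly_eq_eigenvalues
  have hprod : (1 + Complex.I • A.map Complex.ofReal).det =
      (Finset.univ.val.map fun k => 1 + Complex.I * (hA.eigenvalues k : ℂ)).prod := by
    rw [det_one_add_smul_eq_prod_roots, hroots, Multiset.map_map, Function.comp_def]
  rw [hprod, ← coe_sum_map_arg, Multiset.map_map, liftedAngle_eq_sum_arctan hA]
  · simp only [Function.comp_def, arg_one_add_I_mul_ofReal, Finset.sum_map_val]
  · intro hzero
    obtain ⟨k, -, hk⟩ := Multiset.mem_map.1 hzero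
    simpa using congrArg Complex.re hk

lemma coe_weightedAngle (hA : A.IsSymm) (hd : ∀ i, 0 < d i) :
    (weightedAngle d A : Real.Angle) =
      Complex.arg ((diagonal d).map Complex.ofReal + Complex.I • A.map Complex.ofReal).det := by
  let S : Matrix (Fin m) (Fin m) ℂ := diagonal fun i => (√(d i) : ℂ)
  have hS : S = (diagonal fun i => √(d i)).map Complex.ofRealHom := by
    rw [diagonal_map (map_zero _)]
    rfl
  have hSS : S * S = (diagonal d).map Complex.ofReal := by
    simp only [S, diagonal_mul_diagonal, ← Complex.ofReal_mul, mul_self_sqrt (hd _).le,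
      diagonal_map Complex.ofReal_zero]
  have hfactor : (diagonal d).map Complex.ofReal + Complex.I • A.map Complex.ofReal =
      S * (1 + Complex.I • (weightedConj d A).map Complex.ofReal) * S := by
    have hA' : A.map Complex.ofReal = S * (weightedConj d A).map Complex.ofRealHom * S := by
      rw [hS, ← Matrix.map_mul, ← Matrix.map_mul, diagonal_sqrt_mul_weightedConj_mul hd]
      rfl
    rw [mul_add, add_mul, mul_one, hSS, mul_smul_comm, smul_mul_assoc, hA']
    rfl
  have hdet : S.det * S.det = ((∏ i, d i : ℝ) : ℂ) := by
    rw [← det_mul, hSS, diagonal_map Complex.ofReal_zero, det_diagonal, Complex.ofReal_prod]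
  rw [hfactor, det_mul, det_mul, mul_right_comm, hdet,
    Complex.arg_real_mul _ (Finset.prod_pos fun i _ => hd i)]
  exact coe_liftedAngle (isHermitian_weightedConj hA d)

end WeightedAngle

section SpaceTimeAngle

section Weight

open scoped ComplexOrder

variable {m : ℕ} {A : Matrix (Fin m) (Fin m) ℝ} {δ : Fin m → ℝ}

lemma continuousOn_weightedAngle_one_add_smul (hA : A.IsSymm) (hδ : 0 ≤ δ) :
    ContinuousOn (fun r : ℝ => weightedAngle (1 + r • δ) (r • A)) (Set.Ici 0) := by
  refine continuousOn_liftedAngle.comp ?_ fun r _ => isHermitian_weightedConj (hA.smul r) _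
  have hinv (i : Fin m) :
      ContinuousOn (fun r : ℝ => (√((1 + r • δ) i))⁻¹) (Set.Ici 0) := by
    refine ContinuousOn.inv₀ (by simp only [Pi.add_apply, Pi.smul_apply]; fun_prop) fun r hr => ?_
    exact (sqrt_pos.2 (add_pos_of_pos_of_nonneg one_pos (mul_nonneg hr (hδ i)))).ne'
  refine continuousOn_pi.2 fun i => continuousOn_pi.2 fun j => ?_
  simp only [weightedConj, diagonal_mul, mul_diagonal, Matrix.smul_apply]
  exact ((hinv i).mul (continuousOn_id.smul continuousOn_const)).mul (hinv j)

lemma re_nonneg_of_mem_roots (hA : A.IsSymm) (hδ : 0 ≤ δ) {z : ℂ}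
    (hz : z ∈ ((diagonal δ).map Complex.ofReal +
      Complex.I • A.map Complex.ofReal).charpoly.roots) : 0 ≤ z.re := by
  rw [diagonal_map Complex.ofReal_zero] at hz
  refine re_nonneg_of_mem_roots_charpoly_add_I_smul (posSemidef_diagonal_iff.2 fun i => ?_)
    (isHermitian_map_ofReal (isHermitian_iff_isSymm.2 hA)) hz
  exact Complex.zero_le_real.2 (hδ i)

lemma weightedAngle_one_add_smul (hA : A.IsSymm) (hδ : 0 ≤ δ) {r : ℝ} (hr : 0 ≤ r) :
    weightedAngle (1 + r • δ) (r • A) =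
      (((diagonal δ).map Complex.ofReal + Complex.I • A.map Complex.ofReal).charpoly.roots.map
        fun z => Complex.arg (1 + r * z)).sum := by
  set M := (diagonal δ).map Complex.ofReal + Complex.I • A.map Complex.ofReal with hM
  have hroots : ∀ z ∈ M.charpoly.roots, 0 ≤ z.re := fun z => re_nonneg_of_mem_roots hA hδ
  refine eqOn_of_coe_angle_eq (continuousOn_weightedAngle_one_add_smul hA hδ)
    (continuousOn_sum_arg_one_add_mul hroots) (fun r hr => ?_) ?_ hr
  · have hd (i : Fin m) : 0 < (1 + r • δ) i :=
      add_pos_of_pos_of_nonneg one_pos (mul_nonneg hr (hδ i))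
    have hmatrix : (diagonal (1 + r • δ)).map Complex.ofReal +
        Complex.I • (r • A).map Complex.ofReal = 1 + (r : ℂ) • M := by
      ext i j
      rcases eq_or_ne i j with rfl | hij
      · simp [hM, Matrix.smul_apply]
        ring
      · simp [hM, Matrix.smul_apply, hij, mul_left_comm]
    have hne : 0 ∉ M.charpoly.roots.map fun z => 1 + (r : ℂ) * z := fun h0 => by
      obtain ⟨z, hz, hz0⟩ := Multiset.mem_map.1 h0
      exact Complex.slitPlane_ne_zero (one_add_mul_mem_slitPlane hr (hroots z hz)) hz0
    rw [coe_weightedAngle (hA.smul r) hd, hmatrix, det_one_add_smul_eq_prod_roots,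
      ← coe_sum_map_arg _ hne, Multiset.map_map, Function.comp_def]
  · simp [weightedAngle_zero]

end Weight

variable {n : ℕ} {A B C : Matrix (Fin (n + 1)) (Fin (n + 1)) ℝ}

/-- The real diagonal of `I_n`. -/
noncomputable def spatialWeight (n : ℕ) : Fin (n + 1) → ℝ := fun i => if i = 0 then 0 else 1

lemma spatialWeight_nonneg (n : ℕ) : 0 ≤ spatialWeight n := fun i => by
  rw [spatialWeight]
  split_ifs <;> simp

lemma Inmat_eq_map_diagonal (n : ℕ) :
    Inmat n = (diagonal (spatialWeight n)).map Complex.ofReal := by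
  simp only [Inmat, spatialWeight, diagonal_map Complex.ofReal_zero, apply_ite Complex.ofReal,
    Complex.ofReal_zero, Complex.ofReal_one]

open scoped ComplexOrder in
lemma posSemidef_Inmat (n : ℕ) : (Inmat n).PosSemidef := by
  refine posSemidef_diagonal_iff.2 fun i => ?_
  split_ifs
  exacts [le_rfl, zero_le_one]

lemma det_cmat_ne_zero (hA : A.IsSymm) (h0 : A 0 0 ≠ 0) : (cmat A).det ≠ 0 := by
  intro hdet
  obtain ⟨x, hx, hAx⟩ := exists_mulVec_eq_zero_iff.2 hdet
  have hspace : Inmat n *ᵥ x = 0 :=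
    mulVec_eq_zero_of_add_I_smul_mulVec_eq_zero (posSemidef_Inmat n)
      (isHermitian_map_ofReal (isHermitian_iff_isSymm.2 hA)) hAx
  have hx_succ (i : Fin n) : x i.succ = 0 := by
    simpa [Inmat, mulVec_diagonal] using congrFun hspace i.succ
  have hx_zero : x 0 = 0 := by
    have hrow := congrFun hAx 0
    simpa [cmat, Inmat, mulVec, dotProduct, Fin.sum_univ_succ, hx_succ, h0] using hrow
  exact hx (funext (Fin.cases hx_zero hx_succ))

lemma tendsto_weightedAngle_spaceTimeAngle (hA : A.IsSymm) (h0 : A 0 0 ≠ 0) :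
    Tendsto (fun r : ℝ => weightedAngle (1 + r • spatialWeight n) (r • A)) atTop
      (nhds (spaceTimeAngle A)) := by
  have hdet := det_cmat_ne_zero hA h0
  have hcmat : cmat A = (diagonal (spatialWeight n)).map Complex.ofReal +
      Complex.I • A.map Complex.ofReal := by
    rw [cmat, Inmat_eq_map_diagonal]
  have hroots : ∀ z ∈ (cmat A).charpoly.roots, 0 ≤ z.re := fun z hz =>
    re_nonneg_of_mem_roots hA (spatialWeight_nonneg n) (hcmat ▸ hz)
  have hroots0 : 0 ∉ (cmat A).charpoly.roots := fun hz => hdet <| by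
    rw [det_eq_prod_roots_charpoly, Multiset.prod_eq_zero hz]
  rw [spaceTimeAngle, if_neg hdet]
  refine (tendsto_sum_arg_one_add_mul hroots hroots0).congr' ?_
  filter_upwards [eventually_ge_atTop 0] with r hr
  rw [weightedAngle_one_add_smul hA (spatialWeight_nonneg n) hr, hcmat]

lemma smul_spaceTimeAngle_add_le (hA : A.PosSemidef) (hB : B.PosSemidef) (hC : C.IsSymm)
    (hA0 : A 0 0 ≠ 0) (hB0 : B 0 0 ≠ 0) (hC0 : C 0 0 ≠ 0) {s t : ℝ} (hs : 0 ≤ s) (ht : 0 ≤ t)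
    (hst : s + t = 1) (hle : s • A + t • B ≤ C) :
    s * spaceTimeAngle A + t * spaceTimeAngle B ≤ spaceTimeAngle C := by
  have hlimA :=
    tendsto_weightedAngle_spaceTimeAngle (isHermitian_iff_isSymm.1 hA.isHermitian) hA0
  have hlimB :=
    tendsto_weightedAngle_spaceTimeAngle (isHermitian_iff_isSymm.1 hB.isHermitian) hB0
  have hlimC := tendsto_weightedAngle_spaceTimeAngle hC hC0
  refine le_of_tendsto_of_tendsto ((hlimA.const_mul s).add (hlimB.const_mul t)) hlimC ?_
  filter_upwards [eventually_ge_atTop 0] with r hr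
  refine smul_weightedAngle_add_le (hA.smul hr) (hB.smul hr) (hC.smul r) hs ht hst ?_ _
  rw [smul_comm s, smul_comm t, ← smul_add]
  exact smul_le_smul_of_nonneg_left hle hr

lemma two_mul_smul_one_le_of_lt_spaceTimeAngle (hA : A.IsSymm) (h0 : A 0 0 ≠ 0) {μ : ℝ}
    (hμ : μ ≤ 0) (hangle : n * (π / 2) + arctan μ < spaceTimeAngle A) : (2 * μ) • 1 ≤ A := by
  obtain ⟨r, hr, hr1⟩ :=
    (((tendsto_weightedAngle_spaceTimeAngle hA h0).eventually_const_le hangle).and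
      (eventually_ge_atTop 1)).exists
  have hr0 : 0 < r := one_pos.trans_le hr1
  have hd (i : Fin (n + 1)) : 0 < (1 + r • spatialWeight n) i :=
    add_pos_of_pos_of_nonneg one_pos (mul_nonneg hr0.le (spatialWeight_nonneg n i))
  have hd2 (i : Fin (n + 1)) : (1 + r • spatialWeight n) i ≤ 2 * r := by
    simp only [Pi.add_apply, Pi.one_apply, Pi.smul_apply, smul_eq_mul, spatialWeight]
    split_ifs <;> linarith
  have hscalar : (r * (2 * μ)) • (1 : Matrix (Fin (n + 1)) (Fin (n + 1)) ℝ) ≤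
      μ • diagonal (1 + r • spatialWeight n) := by
    rw [smul_one_eq_diagonal, ← diagonal_smul, le_iff, diagonal_sub, posSemidef_diagonal_iff]
    intro i
    have hmul := mul_le_mul_of_nonpos_left (hd2 i) hμ
    change 0 ≤ μ * (1 + r • spatialWeight n) i - r * (2 * μ)
    linarith
  have hle := hscalar.trans (smul_diagonal_le_of_le_weightedAngle (hA.smul r) hd hr)
  rw [mul_smul] at hle
  exact (smul_le_smul_iff_of_pos_left hr0).1 hle

lemma posSemidef_of_le_spaceTimeAngle (hA : A.IsSymm) (h0 : A 0 0 ≠ 0)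
    (hangle : n * (π / 2) ≤ spaceTimeAngle A) : A.PosSemidef := by
  have hA' : A.IsHermitian := isHermitian_iff_isSymm.2 hA
  refine hA'.posSemidef_iff_eigenvalues_nonneg.2 fun k =>
    (le_of_forall_lt_imp_le_of_dense fun ν hν => ?_ : (0 : ℝ) ≤ hA'.eigenvalues k)
  have hangle' : n * (π / 2) + arctan (ν / 2) < spaceTimeAngle A := by
    linarith [arctan_lt_zero.2 (div_neg_of_neg_of_pos hν two_pos)]
  have hle := two_mul_smul_one_le_of_lt_spaceTimeAngle hA h0
    (div_neg_of_neg_of_pos hν two_pos).le hangle'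
  rw [mul_div_cancel₀ _ two_ne_zero, ← Algebra.algebraMap_eq_smul_one] at hle
  exact (algebraMap_le_iff_le_spectrum hA'.isSelfAdjoint).1 hle _
    (hA'.eigenvalues_mem_spectrum_real k)

end SpaceTimeAngle

section Subequation

variable {n : ℕ} {c : ℝ} {A B C : Matrix (Fin (n + 1)) (Fin (n + 1)) ℝ}

lemma exists_pos_sub_smul_one_mem (hA : A ∈ symInterior (calF n c)) :
    ∃ η > (0 : ℝ), (A - η • 1) 0 0 ≠ 0 ∧ A - η • 1 ∈ calF n c := by
  have hlim : Tendsto (fun η : ℝ => A - η • (1 : Matrix (Fin (n + 1)) (Fin (n + 1)) ℝ))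
      (nhdsWithin 0 (Set.Ioi 0)) (nhds A) := by
    have hcont : Continuous fun η : ℝ => A - η • (1 : Matrix (Fin (n + 1)) (Fin (n + 1)) ℝ) := by
      fun_prop
    simpa using (hcont.tendsto 0).mono_left nhdsWithin_le_nhds
  have hmem : ∀ᶠ η in nhdsWithin (0 : ℝ) (Set.Ioi 0), A - η • 1 ∈ calF n c :=
    (hlim.eventually hA.2).mono fun η hη => hη (hA.1.sub (isSymm_one.smul η))
  have hne : ∀ᶠ η in nhdsWithin (0 : ℝ) (Set.Ioi 0), (A - η • 1) 0 0 ≠ 0 := by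
    have hη : ∀ᶠ η in nhdsWithin (0 : ℝ) (Set.Ioi 0), η ≠ A 0 0 := by
      rcases le_or_gt (A 0 0) 0 with h0 | h0
      · filter_upwards [self_mem_nhdsWithin] with η hη using (h0.trans_lt hη).ne'
      · filter_upwards [Ioo_mem_nhdsGT h0] with η hη using hη.2.ne
    refine hη.mono fun η hη => ?_
    rw [Matrix.sub_apply, Matrix.smul_apply, one_apply_eq, smul_eq_mul, mul_one]
    exact sub_ne_zero.2 hη.symm
  obtain ⟨η, hηne, hηmem, hη⟩ := (hne.and (hmem.and self_mem_nhdsWithin)).exists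
  exact ⟨η, hη, hηne, hηmem⟩

lemma posDef_of_mem_symInterior_calF (hc : n * (π / 2) ≤ c)
    (hA : A ∈ symInterior (calF n c)) : A.PosDef := by
  obtain ⟨η, hη, h0, hsymm, hangle⟩ := exists_pos_sub_smul_one_mem hA
  have hpos := (PosDef.one.smul hη).posSemidef_add
    (posSemidef_of_le_spaceTimeAngle hsymm h0 (hc.trans hangle))
  rwa [sub_add_cancel] at hpos

lemma mem_calF_of_smul_add_smul_le (hA : A.PosDef) (hB : B.PosDef) (hA' : A ∈ calF n c)
    (hB' : B ∈ calF n c) (hC : C.IsSymm) {s t : ℝ} (hs : 0 ≤ s) (ht : 0 ≤ t) (hst : s + t = 1)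
    (hle : s • A + t • B ≤ C) : C ∈ calF n c := by
  have hC0 : 0 < C 0 0 := by
    have hdiag : (s • A + t • B) 0 0 ≤ C 0 0 :=
      sub_nonneg.1 ((le_iff.1 hle).diag_nonneg (i := 0))
    exact (convex_Ioi (0 : ℝ) hA.diag_pos hB.diag_pos hs ht hst).out.trans_le hdiag
  refine ⟨hC, (convex_Ici c hA'.2 hB'.2 hs ht hst).out.trans ?_⟩
  exact smul_spaceTimeAngle_add_le hA.posSemidef hB.posSemidef hC hA.diag_pos.ne' hB.diag_pos.ne'
    hC0.ne' hs ht hst hle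

lemma mem_symInterior_calF_of_smul_add_smul_le (hc : n * (π / 2) ≤ c)
    (hA : A ∈ symInterior (calF n c)) (hB : B ∈ symInterior (calF n c)) (hC : C.IsSymm)
    {s t : ℝ} (hs : 0 ≤ s) (ht : 0 ≤ t) (hst : s + t = 1) (hle : s • A + t • B ≤ C) :
    C ∈ symInterior (calF n c) := by
  have hshift (X : Matrix (Fin (n + 1)) (Fin (n + 1)) ℝ) :
      Tendsto (fun D => X + (D - C)) (nhds C) (nhds X) := by
    have hcont : Continuous fun D => X + (D - C) := by fun_prop
    simpa using hcont.tendsto C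
  refine ⟨hC, ?_⟩
  filter_upwards [(hshift A).eventually (eventually_mem_symInterior hA),
    (hshift B).eventually (eventually_mem_symInterior hB)] with D hAD hBD hD
  have hA' := hAD (hA.1.add (hD.sub hC))
  have hB' := hBD (hB.1.add (hD.sub hC))
  refine mem_calF_of_smul_add_smul_le (posDef_of_mem_symInterior_calF hc hA')
    (posDef_of_mem_symInterior_calF hc hB') (hA'.2.self_of_nhds hA'.1)
    (hB'.2.self_of_nhds hB'.1) hD hs ht hst ?_
  calc s • (A + (D - C)) + t • (B + (D - C))
      = s • A + t • B + (D - C) := by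
        rw [smul_add, smul_add, add_add_add_comm, ← add_smul, hst, one_smul]
    _ ≤ C + (D - C) := add_le_add_left hle _
    _ = D := add_sub_cancel C D

lemma convex_symInterior_calF (hc : n * (π / 2) ≤ c) : Convex ℝ (symInterior (calF n c)) :=
  fun _ hA _ hB _ _ hs ht hst => mem_symInterior_calF_of_smul_add_smul_le hc hA hB
    ((hA.1.smul _).add (hB.1.smul _)) hs ht hst le_rfl

lemma isUpperSet_symInterior_calF (hc : n * (π / 2) ≤ c) :
    IsUpperSet (symInterior (calF n c)) := fun A B hle hA => by
  have hB : B.IsSymm := by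
    have hsymm := hA.1.add (isHermitian_iff_isSymm.1 (le_iff.1 hle).isHermitian)
    rwa [add_sub_cancel] at hsymm
  refine mem_symInterior_calF_of_smul_add_smul_le hc hA hA hB zero_le_one le_rfl (add_zero 1) ?_
  rwa [one_smul, zero_smul, add_zero]

end Subequation

lemma isOpen_cylinder {n : ℕ} {I : Set ℝ} (hI : IsOpen I) {D : Set (Fin n → ℝ)}
    (hD : IsOpen D) : IsOpen {y : Fin (n + 1) → ℝ | y 0 ∈ I ∧ Fin.tail y ∈ D} :=
  (hI.preimage (continuous_apply 0)).inter
    (hD.preimage (continuous_pi fun i => continuous_apply i.succ))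

theorem half_sum_typeF_general (n : ℕ) (c : ℝ) (hc : (n : ℝ) * π / 2 ≤ c)
    {U : Set (Fin (n + 1) → ℝ)} (hU : IsOpen U) (v w : (Fin (n + 1) → ℝ) → EReal)
    (hv : IsTypeF (calF n c) U v) (hw : IsTypeF (calF n c) U w) :
    IsTypeF (calF n c) U (fun y => (((1 : ℝ) / 2 : ℝ) : EReal) * (v y + w y)) := by
  have hc' : n * (π / 2) ≤ c := by rwa [← mul_div_assoc]
  exact .half_add (convex_symInterior_calF hc') (isUpperSet_symInterior_calF hc') hU hv hw

end

/-- Let `c ∈ [nπ/2, (n+1)π/2)`, `I ⊂ ℝ` an open interval and `D ⊂ ℝⁿ` a bounded domain.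
If `v, w ∈ ℱ_c(I × D)` then `(v + w)/2 ∈ ℱ_c(I × D)`. -/
theorem half_sum_typeF (n : ℕ) (c : ℝ)
    (hc : (n : ℝ) * π / 2 ≤ c) (hc' : c < ((n : ℝ) + 1) * π / 2)
    (I : Set ℝ) (hIopen : IsOpen I) (hIconv : Convex ℝ I) (hIne : I.Nonempty)
    (D : Set (Fin n → ℝ)) (hDopen : IsOpen D) (hDconn : IsConnected D)
    (hDbdd : Bornology.IsBounded D)
    (v w : (Fin (n+1) → ℝ) → EReal)
    (hv : IsTypeF (calF n c) {y | y 0 ∈ I ∧ Fin.tail y ∈ D} v)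
    (hw : IsTypeF (calF n c) {y | y 0 ∈ I ∧ Fin.tail y ∈ D} w) :
    IsTypeF (calF n c) {y | y 0 ∈ I ∧ Fin.tail y ∈ D}
      (fun y => (((1 : ℝ) / 2 : ℝ) : EReal) * (v y + w y)) :=
  half_sum_typeF_general n c hc (isOpen_cylinder hIopen hDopen) v w hv hw
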